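/- A finite-dimensional complex representation ρ of SL_n(ℤ) (n ≥ 3) has depth dividing ℓ (i.e. its restriction to the congruence subgroup Γ_n(ℓ) is algebraic) if and only if ρ(E_{1,2}^ℓ) is a unipotent matrix. -/

import Mathlib

open Matrix

/-- The elementary matrix `E = E_{1,2}` (identity plus a `1` in position `(1,2)`)
as an element of `SL_{n+3}(R)`. -/
def Emat (n : ℕ) (R : Type*) [CommRing R] :
    Matrix.SpecialLinearGroup (Fin (n + 3)) R :=
  ⟨Matrix.transvection 0 1 1, by exact Matrix.det_transvection_of_ne 0 1 zero_ne_one 1⟩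

/-- A representation of `SL_n(ℂ)` is algebraic (rational) if each matrix entry of `ρ(g)`
is a polynomial function of the matrix entries of `g`. -/
def IsAlgebraicSL {n N : ℕ}
    (ρ : Matrix.SpecialLinearGroup (Fin n) ℂ →* GL (Fin N) ℂ) : Prop :=
  ∀ i j : Fin N, ∃ P : MvPolynomial (Fin n × Fin n) ℂ,
    ∀ g : Matrix.SpecialLinearGroup (Fin n) ℂ,
      (ρ g : Matrix (Fin N) (Fin N) ℂ) i j =
        MvPolynomial.eval (fun q => (g : Matrix (Fin n) (Fin n) ℂ) q.1 q.2) P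

/-- A representation `ρ` of `SL_n(ℤ)` has depth dividing `ℓ` if its restriction to the
principal congruence subgroup `Γ_n(ℓ)` agrees with (the restriction of) an algebraic
representation of `SL_n(ℂ)`. -/
def DepthDvd {n N : ℕ} (ρ : Matrix.SpecialLinearGroup (Fin n) ℤ →* GL (Fin N) ℂ)
    (ℓ : ℕ) : Prop :=
  ∃ ρ' : Matrix.SpecialLinearGroup (Fin n) ℂ →* GL (Fin N) ℂ, IsAlgebraicSL ρ' ∧
    ∀ g ∈ (Matrix.SpecialLinearGroup.map (n := Fin n) (Int.castRingHom (ZMod ℓ))).ker,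
      ρ g = ρ' (Matrix.SpecialLinearGroup.map (Int.castRingHom ℂ) g)

/-!
Suppose `ρ (E₁₂ ^ ℓ)` is unipotent. All `e_ij(ℓ)` are conjugate in `SL_n(ℤ)`, so every
`ρ (e_ij(ℓ))` is unipotent and its powers extend to a polynomial one-parameter group `x_ij` with
`x_ij(ℓ k) = ρ (e_ij(ℓ)) ^ k`. The `x_ij` satisfy the Steinberg relations, which are polynomial
identities holding on the Zariski dense set `ℓℕ × ℓℕ`. Differentiating them yields a Lie algebra map
`θ` from `sl_n`, equivariant under each `x_ij(s)`. Along a curve of words in transvections with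
matrix `E(s)`, the corresponding product `F(s)` of flows satisfies `F' = θ(E' E⁻¹) F`, hence two
curves of words with the same matrices have proportional flows. Gaussian elimination over the field
of rational functions is a rational section from matrices to words; with it, the flow of a word
depends only on the matrix of the word, which gives a representation `R` of `SL_n(ℂ)`. The entries
of `R` are locally quotients of polynomials, hence polynomials.

The subgroup of `SL_n(ℤ)` on which `ρ` and `R` agree contains all `e_ij(ℓ k)` and is normal by
Zariski density of the group they generate in `SL_n`. The solution of the congruence subgroup
problem by Mennicke symbols shows that such a subgroup contains `Γ_n(ℓ)`.

Conversely, if `R` is algebraic then `R (e_ij(t))` is polynomial in `t`, and for `t ≠ 0` its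
characteristic polynomial does not depend on `t`, as these elements are conjugate in `SL_n(ℂ)`. By
continuity it is that of `R (e_ij(0)) = 1`.
-/

namespace SLDepth

open Matrix.SpecialLinearGroup

local notation "𝐞" => Matrix.SpecialLinearGroup.transvection

section Transvections

variable {ι R : Type*} [DecidableEq ι] [Fintype ι] [CommRing R] {i j k l : ι}

lemma commute_transvection (hij : i ≠ j) (hkl : k ≠ l) (hil : i ≠ l) (hjk : j ≠ k) (s t : R) :
    Commute (𝐞 hij s) (𝐞 hkl t) := by
  apply Subtype.ext
  simp only [coe_mul, transvection_coe, mul_add, add_mul, mul_one, one_mul,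
    single_mul_single_of_ne _ _ _ _ hjk, single_mul_single_of_ne _ _ _ _ hil.symm, add_zero]
  abel

lemma transvection_mul_transvection (hij : i ≠ j) (hjk : j ≠ k) (hik : i ≠ k) (s t : R) :
    𝐞 hij s * 𝐞 hjk t = 𝐞 hik (s * t) * 𝐞 hjk t * 𝐞 hij s := by
  apply Subtype.ext
  simp only [coe_mul, transvection_coe, mul_add, add_mul, mul_one, one_mul,
    single_mul_single_same, single_mul_single_of_ne _ _ _ _ hik.symm,
    single_mul_single_of_ne _ _ _ _ hjk.symm, add_zero]
  abel

lemma transvection_conj_transvection (hij : i ≠ j) (hjk : j ≠ k) (hik : i ≠ k) (s t : R) :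
    𝐞 hij s * 𝐞 hjk t * (𝐞 hij s)⁻¹ = 𝐞 hik (s * t) * 𝐞 hjk t := by
  rw [transvection_mul_transvection hij hjk hik, mul_inv_cancel_right]

lemma transvection_pow (hij : i ≠ j) (t : R) (m : ℕ) : 𝐞 hij t ^ m = 𝐞 hij (m * t) := by
  induction m with
  | zero => simp
  | succ m ih => rw [pow_succ, ih, ← transvection_add, Nat.cast_succ, add_mul, one_mul]

lemma transvection_zpow (hij : i ≠ j) (t : R) (m : ℤ) : 𝐞 hij t ^ m = 𝐞 hij (m * t) := by
  cases m with
  | ofNat m => simpa using transvection_pow hij t m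
  | negSucc m => rw [zpow_negSucc, transvection_pow, transvection_inv, Int.cast_negSucc, neg_mul]

lemma map_transvection {S : Type*} [CommRing S] (f : R →+* S) (hij : i ≠ j) (t : R) :
    SpecialLinearGroup.map f (𝐞 hij t) = 𝐞 hij (f t) := by
  apply Subtype.ext
  simp [transvection_coe, Matrix.map_add]

lemma transpose_transvection (hij : i ≠ j) (t : R) : (𝐞 hij t).transpose = 𝐞 hij.symm t :=
  Subtype.ext (by simp [transvection_coe])

lemma isConj_transvection_row (hij : i ≠ j) (hkj : k ≠ j) (t : R) :
    IsConj (𝐞 hij t) (𝐞 hkj t) := by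
  obtain rfl | hik := eq_or_ne i k
  · rfl
  refine isConj_iff.mpr ⟨𝐞 hik (-1) * 𝐞 hik.symm 1, mul_inv_eq_iff_eq_mul.mpr (Subtype.ext ?_)⟩
  simp only [coe_mul, transvection_coe, mul_add, add_mul, mul_one, one_mul,
    single_mul_single_same, single_mul_single_of_ne _ _ _ _ hij.symm,
    single_mul_single_of_ne _ _ _ _ hkj.symm, single_mul_single_of_ne _ _ _ _ hik.symm,
    add_zero, neg_mul, mul_neg, ← Matrix.single_neg]
  abel

lemma isConj_transvection_col (hij : i ≠ j) (hik : i ≠ k) (t : R) :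
    IsConj (𝐞 hij t) (𝐞 hik t) := by
  obtain ⟨w, hw⟩ := isConj_iff.mp (isConj_transvection_row hij.symm hik.symm t)
  refine (isConj_iff.mpr ⟨w.transpose, mul_inv_eq_iff_eq_mul.mpr (Subtype.ext ?_)⟩).symm
  have h := congrArg (fun g : SpecialLinearGroup ι R => g.1ᵀ) (mul_inv_eq_iff_eq_mul.mp hw)
  simp only [coe_mul, Matrix.transpose_mul, ← coe_transpose, transpose_transvection] at h
  exact h.symm

/-- A third index makes all transvections with the same coefficient conjugate; for two indices
`e₁₂(t)` and `e₂₁(t)` need not be. -/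
lemma isConj_transvection (third : ∀ a b : ι, ∃ c, c ≠ a ∧ c ≠ b) (hij : i ≠ j) (hkl : k ≠ l)
    (t : R) : IsConj (𝐞 hij t) (𝐞 hkl t) := by
  obtain ⟨c, hcj, hcl⟩ := third j l
  exact ((isConj_transvection_row hij hcj t).trans (isConj_transvection_col hcj hcl t)).trans
    (isConj_transvection_row hcl hkl t)

end Transvections

section Field

variable {ι F : Type*} [DecidableEq ι] [Fintype ι] [Field F]

lemma diag2n_eq_transvection_mul {i j : ι} (hij : i ≠ j) (a : F) (ha : a ≠ 0) :
    diag2n hij a ha = 𝐞 hij a * 𝐞 hij.symm (-a⁻¹) * 𝐞 hij a *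
      𝐞 hij (-1) * 𝐞 hij.symm 1 * 𝐞 hij (-1) := by
  apply Subtype.ext
  ext x y
  simp [diag2n_coe, transvection_coe, mul_add, add_mul, mul_inv_cancel₀ ha, inv_mul_cancel₀ ha,
    single_mul_single_of_ne _ _ _ _ hij, single_mul_single_of_ne _ _ _ _ hij.symm,
    Matrix.single_apply, Matrix.diagonal_apply, Matrix.one_apply]
  grind

theorem transvection_induction [Nontrivial ι] (P : SpecialLinearGroup ι F → Prop)
    (transvec : ∀ (i j : ι) (hij : i ≠ j) (a : F), P (𝐞 hij a))
    (mul : ∀ A B, P A → P B → P (A * B)) (M : SpecialLinearGroup ι F) : P M := by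
  refine diagonal_transvection_induction' P M (fun i j hij c hc => ?_) transvec mul
  rw [diag2n_eq_transvection_mul]
  exact mul _ _ (mul _ _ (mul _ _ (mul _ _ (mul _ _ (transvec ..) (transvec ..)) (transvec ..))
    (transvec ..)) (transvec ..)) (transvec ..)

end Field

section BlockEmbedding

variable {R : Type*} [CommRing R] {m : ℕ}

/-- The block matrix `diag(A, 1)`, with the new index last. -/
def blockMatrix (A : Matrix (Fin m) (Fin m) R) : Matrix (Fin (m + 1)) (Fin (m + 1)) R :=
  Matrix.reindex finSumFinEquiv finSumFinEquiv (Matrix.fromBlocks A 0 0 (1 : Matrix (Fin 1) _ R))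

lemma blockMatrix_eq_of (A : Matrix (Fin m) (Fin m) R) (B : Matrix (Fin (m + 1)) (Fin (m + 1)) R)
    (block : ∀ i j : Fin m, B i.castSucc j.castSucc = A i j)
    (col : ∀ i : Fin m, B i.castSucc (Fin.last m) = 0)
    (row : ∀ j : Fin m, B (Fin.last m) j.castSucc = 0)
    (corner : B (Fin.last m) (Fin.last m) = 1) : blockMatrix A = B := by
  rw [blockMatrix, ← Equiv.eq_symm_apply]
  ext (i | i) (j | j)
  · exact (block i j).symm
  · obtain rfl := Subsingleton.elim j 0
    exact (col i).symm
  · obtain rfl := Subsingleton.elim i 0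
    exact (row j).symm
  · obtain rfl := Subsingleton.elim i 0
    obtain rfl := Subsingleton.elim j 0
    exact corner.symm

lemma det_blockMatrix (A : Matrix (Fin m) (Fin m) R) : (blockMatrix A).det = A.det := by
  rw [blockMatrix, Matrix.det_reindex_self, Matrix.det_fromBlocks_zero₂₁, Matrix.det_one, mul_one]

lemma blockMatrix_mul (A B : Matrix (Fin m) (Fin m) R) :
    blockMatrix (A * B) = blockMatrix A * blockMatrix B := by
  simp only [blockMatrix, Matrix.reindex_apply, Matrix.submatrix_mul_equiv,
    Matrix.fromBlocks_multiply, Matrix.mul_zero, Matrix.zero_mul, add_zero, zero_add,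
    Matrix.mul_one]

variable (m) in
/-- The embedding `A ↦ diag(A, 1)` of `SL_m` into `SL_{m+1}`. -/
def blockEmbedding : SpecialLinearGroup (Fin m) R →* SpecialLinearGroup (Fin (m + 1)) R where
  toFun A := ⟨blockMatrix A.1, by rw [det_blockMatrix, A.2]⟩
  map_one' := Subtype.ext (by simp [blockMatrix])
  map_mul' A B := Subtype.ext (blockMatrix_mul A.1 B.1)

lemma blockEmbedding_castSucc (A : SpecialLinearGroup (Fin m) R) (i j : Fin m) :
    blockEmbedding m A i.castSucc j.castSucc = A i j := by
  change Matrix.fromBlocks _ _ _ _ (finSumFinEquiv.symm (Fin.castAdd 1 i))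
    (finSumFinEquiv.symm (Fin.castAdd 1 j)) = _
  rw [finSumFinEquiv_symm_apply_castAdd, finSumFinEquiv_symm_apply_castAdd,
    Matrix.fromBlocks_apply₁₁]

lemma exists_blockEmbedding_eq (g : SpecialLinearGroup (Fin (m + 1)) R)
    (col : ∀ i : Fin m, g i.castSucc (Fin.last m) = 0)
    (row : ∀ j : Fin m, g (Fin.last m) j.castSucc = 0)
    (corner : g (Fin.last m) (Fin.last m) = 1) :
    ∃ A : SpecialLinearGroup (Fin m) R, blockEmbedding m A = g := by
  have h : blockMatrix (g.1.submatrix Fin.castSucc Fin.castSucc) = g.1 :=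
    blockMatrix_eq_of _ _ (fun _ _ => rfl) col row corner
  exact ⟨⟨g.1.submatrix Fin.castSucc Fin.castSucc, by rw [← det_blockMatrix, h, g.2]⟩,
    Subtype.ext h⟩

lemma blockEmbedding_transvection {i j : Fin m} (hij : i ≠ j) (t : R) :
    blockEmbedding m (𝐞 hij t) = 𝐞 ((Fin.castSucc_injective m).ne hij) t := by
  refine Subtype.ext (blockMatrix_eq_of _ _ (fun a b => ?_) (fun a => ?_) (fun b => ?_) ?_)
  · simp [transvection_coe, Matrix.single_apply, Matrix.one_apply]
  · simp [transvection_coe, (Fin.castSucc_lt_last _).ne]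
  · simp [transvection_coe, (Fin.castSucc_lt_last _).ne,
      (Fin.castSucc_lt_last _).ne']
  · simp [transvection_coe, (Fin.castSucc_lt_last _).ne]

end BlockEmbedding

section CongruenceSubgroup

variable {ι : Type*} [DecidableEq ι] [Fintype ι] {q : ℕ} {K : Subgroup (SpecialLinearGroup ι ℤ)}

variable (ι q) in
/-- The principal congruence subgroup `Γ(q)` of `SL_ι(ℤ)`. -/
def congruenceSubgroup : Subgroup (SpecialLinearGroup ι ℤ) :=
  (SpecialLinearGroup.map (n := ι) (Int.castRingHom (ZMod q))).ker

instance : (congruenceSubgroup ι q).Normal := MonoidHom.normal_ker _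

lemma mem_congruenceSubgroup {g : SpecialLinearGroup ι ℤ} :
    g ∈ congruenceSubgroup ι q ↔ ∀ i j, (q : ℤ) ∣ g i j - (1 : Matrix ι ι ℤ) i j := by
  have entries : g ∈ congruenceSubgroup ι q ↔
      ∀ i j, ((g i j : ℤ) : ZMod q) = (1 : Matrix ι ι (ZMod q)) i j :=
    MonoidHom.mem_ker.trans (Subtype.ext_iff.trans Matrix.ext_iff.symm)
  refine entries.trans (forall₂_congr fun i j => ?_)
  rw [← ZMod.intCast_zmod_eq_zero_iff_dvd, Int.cast_sub, sub_eq_zero, Matrix.one_apply,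
    Matrix.one_apply, Int.cast_ite, Int.cast_one, Int.cast_zero]

/-- `K` contains the elementary matrices of level `q`. -/
def ContainsElementary (q : ℕ) (K : Subgroup (SpecialLinearGroup ι ℤ)) : Prop :=
  ∀ ⦃i j : ι⦄ (hij : i ≠ j) ⦃t : ℤ⦄, (q : ℤ) ∣ t → 𝐞 hij t ∈ K

lemma containsElementary_congruenceSubgroup :
    ContainsElementary q (congruenceSubgroup ι q) := by
  intro i j hij t ht
  refine mem_congruenceSubgroup.mpr fun a b => ?_
  rw [transvection_coe, Matrix.add_apply, add_sub_cancel_left, Matrix.single_apply]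
  split_ifs
  exacts [ht, dvd_zero _]

lemma ContainsElementary.comap_blockEmbedding {m : ℕ}
    {K : Subgroup (SpecialLinearGroup (Fin (m + 1)) ℤ)} (hK : ContainsElementary q K) :
    ContainsElementary q (K.comap (blockEmbedding m)) := fun _ _ hij _ ht => by
  rw [Subgroup.mem_comap, blockEmbedding_transvection]
  exact hK _ ht

end CongruenceSubgroup

section Vectors

lemma exists_sum_mul_eq_one {ι : Type*} (v : ι → ℤ) (s : Finset ι)
    (hv : ∀ p : ℕ, p.Prime → ∃ i ∈ s, ¬ (p : ℤ) ∣ v i) : ∃ c : ι → ℤ, ∑ i ∈ s, c i * v i = 1 := by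
  have gcd_eq : s.gcd v = 1 := by
    rw [← Finset.normalize_gcd, normalize_eq_one, Int.isUnit_iff_natAbs_eq]
    by_contra h
    obtain ⟨p, hp, hpd⟩ := Nat.exists_prime_and_dvd h
    obtain ⟨i, hi, hpi⟩ := hv p hp
    exact hpi ((Int.natCast_dvd.mpr hpd).trans (Finset.gcd_dvd hi))
  obtain ⟨c, hc⟩ := Finset.gcd_eq_sum_mul s v
  exact ⟨c, by simp only [mul_comm (c _), ← hc, gcd_eq]⟩

/-- The product of the primes dividing `c` but not `b` is a valid `t`. -/
lemma exists_add_mul_isCoprime (a b c : ℤ) (hc : c ≠ 0)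
    (h : ∀ p : ℕ, p.Prime → (p : ℤ) ∣ a → (p : ℤ) ∣ b → ¬ (p : ℤ) ∣ c) :
    ∃ t : ℤ, ∀ p : ℕ, p.Prime → (p : ℤ) ∣ b + t * a → ¬ (p : ℤ) ∣ c := by
  classical
  set t : ℕ := ∏ p ∈ c.natAbs.primeFactors.filter (fun p : ℕ => ¬ (p : ℤ) ∣ b), p with ht
  refine ⟨t, fun p hp hdvd hpc => ?_⟩
  have hpz : Prime (p : ℤ) := Nat.prime_iff_prime_int.mp hp
  have dvd_t : (p : ℤ) ∣ t ↔ ¬ (p : ℤ) ∣ b := by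
    rw [Int.natCast_dvd_natCast, ht, hp.prime.dvd_finsetProd_iff]
    constructor
    · rintro ⟨r, hr, hpr⟩
      rw [Finset.mem_filter, Nat.mem_primeFactors] at hr
      rw [(Nat.prime_dvd_prime_iff_eq hp hr.1.1).mp hpr]
      exact hr.2
    · exact fun hb => ⟨p, Finset.mem_filter.mpr ⟨Nat.mem_primeFactors.mpr
        ⟨hp, Int.natCast_dvd.mp hpc, Int.natAbs_ne_zero.mpr hc⟩, hb⟩, dvd_rfl⟩
  by_cases hb : (p : ℤ) ∣ b
  · rcases hpz.dvd_or_dvd ((Int.dvd_add_right hb).mp hdvd) with hpt | hpa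
    · exact dvd_t.mp hpt hb
    · exact h p hp hpa hb hpc
  · exact hb ((Int.dvd_add_left ((dvd_t.mpr hb).mul_right _)).mp hdvd)

variable {ι : Type*} [DecidableEq ι] {q : ℕ} {z : ι} {v : ι → ℤ}

/-- A vector congruent to the `z`-th basis vector modulo `q`. -/
def IsBasisVectorMod (q : ℕ) (z : ι) (v : ι → ℤ) : Prop :=
  ∀ i, (q : ℤ) ∣ v i - (Pi.single z 1 : ι → ℤ) i

lemma IsBasisVectorMod.dvd (hv : IsBasisVectorMod q z v) {i : ι} (hi : i ≠ z) :
    (q : ℤ) ∣ v i := by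
  simpa [hi] using hv i

lemma IsBasisVectorMod.dvd_sub_one (hv : IsBasisVectorMod q z v) :
    (q : ℤ) ∣ v z - 1 := by
  simpa using hv z

lemma IsBasisVectorMod.add_single (hv : IsBasisVectorMod q z v) (i : ι) {t : ℤ}
    (ht : (q : ℤ) ∣ t) : IsBasisVectorMod q z (v + Pi.single i t) := fun j => by
  rw [Pi.add_apply, add_sub_right_comm]
  refine dvd_add (hv j) ?_
  obtain rfl | hj := eq_or_ne j i
  · simpa using ht
  · simp [hj]

end Vectors

section ColumnReduction

variable {ι : Type*} [DecidableEq ι] [Fintype ι] {q : ℕ} {K : Subgroup (SpecialLinearGroup ι ℤ)}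

lemma transvection_smul {R : Type*} [CommRing R] {i j : ι} (hij : i ≠ j) (t : R) (v : ι → R) :
    𝐞 hij t • v = v + Pi.single i (t * v j) := by
  rw [Matrix.SpecialLinearGroup.smul_def, transvection_coe, add_smul, one_smul]
  ext x
  simp [Matrix.smul_eq_mulVec, Matrix.single_mulVec_eq, Pi.single_apply]

lemma ContainsElementary.exists_smul_apply_eq (hK : ContainsElementary q K) (z : ι)
    (w : ι → ℤ) (hw : ∀ i, (q : ℤ) ∣ w i) (s : Finset ι) (hz : z ∉ s) :
    ∃ k ∈ K, ∀ (v : ι → ℤ) i, (k • v) i = v i + if i ∈ s then w i * v z else 0 := by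
  induction s using Finset.induction_on with
  | empty => exact ⟨1, K.one_mem, by simp⟩
  | insert a s ha ih =>
    rw [Finset.mem_insert, not_or] at hz
    obtain ⟨k, hk, hkv⟩ := ih hz.2
    refine ⟨k * 𝐞 (Ne.symm hz.1) (w a), K.mul_mem hk (hK _ (hw a)), fun v i => ?_⟩
    simp only [mul_smul, hkv, transvection_smul, Pi.add_apply, Pi.single_apply]
    grind

lemma ContainsElementary.exists_smul_eq_add_single (hK : ContainsElementary q K) (x : ι)
    (c : ι → ℤ) (hc : ∀ j, (q : ℤ) ∣ c j) (s : Finset ι) (hx : x ∉ s) :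
    ∃ k ∈ K, ∀ v : ι → ℤ, k • v = v + Pi.single x (∑ j ∈ s, c j * v j) := by
  induction s using Finset.induction_on with
  | empty => exact ⟨1, K.one_mem, by simp⟩
  | insert a s ha ih =>
    rw [Finset.mem_insert, not_or] at hx
    obtain ⟨k, hk, hkv⟩ := ih hx.2
    refine ⟨𝐞 hx.1 (c a) * k, K.mul_mem (hK _ (hc a)) hk, fun v => ?_⟩
    rw [mul_smul, hkv, transvection_smul, Finset.sum_insert ha, add_assoc, ← Pi.single_add,
      add_comm (c a * v a)]
    simp [Ne.symm hx.1]

open MulAction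

/-- Conjugating by `e_{zx}(1)` moves `v_x + v_z = 1` into the entry `z`, from which the other
entries are cleared. -/
lemma single_mem_orbit_of_add_eq_one (hK : ContainsElementary q K)
    (hnorm : ∀ (i j : ι) (hij : i ≠ j), 𝐞 hij (1 : ℤ) ∈ Subgroup.normalizer (K : Set _))
    {x z : ι} (hxz : x ≠ z) {v : ι → ℤ} (hv : IsBasisVectorMod q z v) (hsum : v x + v z = 1) :
    Pi.single z 1 ∈ orbit K v := by
  set e := 𝐞 hxz.symm (1 : ℤ)
  obtain ⟨k, hk, hkv⟩ := hK.exists_smul_apply_eq z (fun i => if i = z then 0 else -v i)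
    (fun i => by split_ifs with h; exacts [dvd_zero _, (hv.dvd h).neg_right]) (Finset.univ.erase z)
    (by simp)
  have hev : e • v = Function.update v z 1 := by
    rw [transvection_smul, one_mul]
    ext i
    obtain rfl | hi := eq_or_ne i z
    · simp [← hsum, add_comm]
    · simp [hi]
  have hkev : k • e • v = Pi.single z 1 := by
    ext i
    obtain rfl | hi := eq_or_ne i z
    · simp [hkv, hev]
    · simp [hkv, hev, hi]
  refine ⟨⟨e⁻¹ * k * e, ?_⟩, ?_⟩
  · simpa using (Subgroup.mem_normalizer_iff.mp (inv_mem (hnorm z x hxz.symm)) k).mp hk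
  · change (e⁻¹ * k * e) • v = _
    rw [mul_smul, mul_smul, hkev, transvection_inv, transvection_smul]
    simp [hxz]

lemma single_mem_orbit_of_exists_ne (hK : ContainsElementary q K)
    (hnorm : ∀ (i j : ι) (hij : i ≠ j), 𝐞 hij (1 : ℤ) ∈ Subgroup.normalizer (K : Set _))
    {x z : ι} (hxz : x ≠ z) {v : ι → ℤ} (hv : IsBasisVectorMod q z v)
    (hprim : ∀ p : ℕ, p.Prime → ∃ i, i ≠ x ∧ ¬ (p : ℤ) ∣ v i) :
    Pi.single z 1 ∈ orbit K v := by
  obtain ⟨c, hc⟩ := exists_sum_mul_eq_one v (Finset.univ.erase x) (by simpa using hprim)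
  have hdvd : (q : ℤ) ∣ 1 - v z - v x := by
    have := ((hv.dvd_sub_one).add (hv.dvd hxz)).neg_right
    rwa [show -(v z - 1 + v x) = 1 - v z - v x by ring] at this
  obtain ⟨k, hk, hkv⟩ := hK.exists_smul_eq_add_single x (fun j => (1 - v z - v x) * c j)
    (fun j => hdvd.mul_right _) (Finset.univ.erase x) (by simp)
  have hkv' : (⟨k, hk⟩ : K) • v = v + Pi.single x (1 - v z - v x) := by
    change k • v = _
    simp only [hkv, mul_assoc, ← Finset.mul_sum, hc, mul_one]
  rw [← orbit_smul (⟨k, hk⟩ : K) v, hkv']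
  exact single_mem_orbit_of_add_eq_one hK hnorm hxz (hv.add_single x hdvd) (by simp [hxz.symm])

/-- Adding a multiple of `q v_x` to `v_y` makes `v_y` coprime to the gcd of the entries other than
`v_x` and `v_y`. -/
lemma single_mem_orbit_of_ne_zero (hK : ContainsElementary q K)
    (hnorm : ∀ (i j : ι) (hij : i ≠ j), 𝐞 hij (1 : ℤ) ∈ Subgroup.normalizer (K : Set _))
    {x y z : ι} (hxy : x ≠ y) (hxz : x ≠ z) (hyz : y ≠ z) {v : ι → ℤ}
    (hv : IsBasisVectorMod q z v) (hprim : ∀ p : ℕ, p.Prime → ∃ i, ¬ (p : ℤ) ∣ v i)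
    (hvz : v z ≠ 0) : Pi.single z 1 ∈ orbit K v := by
  set d := ((Finset.univ.erase x).erase y).gcd v
  have d_dvd : ∀ i, i ≠ x → i ≠ y → d ∣ v i := fun i hx hy => Finset.gcd_dvd (by simp [hx, hy])
  have d_ne : d ≠ 0 := fun h => hvz (zero_dvd_iff.mp (h ▸ d_dvd z hxz.symm hyz.symm))
  obtain ⟨t, ht⟩ := exists_add_mul_isCoprime (q * v x) (v y) d d_ne fun p hp hpx hpy hpd => by
    have hpz : Prime (p : ℤ) := Nat.prime_iff_prime_int.mp hp
    rcases hpz.dvd_or_dvd hpx with hpq | hpx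
    · exact hpz.not_dvd_one ((Int.dvd_iff_dvd_of_dvd_sub (hpq.trans hv.dvd_sub_one)).mp
        (hpd.trans (d_dvd z hxz.symm hyz.symm)))
    · obtain ⟨i, hi⟩ := hprim p hp
      refine hi ?_
      by_cases hix : i = x
      · exact hix ▸ hpx
      by_cases hiy : i = y
      · exact hiy ▸ hpy
      exact hpd.trans (d_dvd i hix hiy)
  have hq : (q : ℤ) ∣ t * q := Dvd.intro_left _ rfl
  rw [← orbit_smul (⟨𝐞 hxy.symm (t * q), hK _ hq⟩ : K) v]
  change _ ∈ orbit K (𝐞 hxy.symm (t * q : ℤ) • v)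
  rw [transvection_smul]
  refine single_mem_orbit_of_exists_ne hK hnorm hxz (hv.add_single y (hq.mul_right _))
    fun p hp => ?_
  by_contra! hall
  refine ht p hp ?_ (Finset.dvd_gcd fun i hi => ?_)
  · simpa [mul_assoc] using hall y hxy.symm
  · simp only [Finset.mem_erase] at hi
    simpa [hi.1] using hall i hi.2.1

lemma single_mem_orbit (hq : q ≠ 0) (hK : ContainsElementary q K)
    (hnorm : ∀ (i j : ι) (hij : i ≠ j), 𝐞 hij (1 : ℤ) ∈ Subgroup.normalizer (K : Set _))
    {x y z : ι} (hxy : x ≠ y) (hxz : x ≠ z) (hyz : y ≠ z) {v : ι → ℤ}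
    (hv : IsBasisVectorMod q z v) (hprim : ∀ p : ℕ, p.Prime → ∃ i, ¬ (p : ℤ) ∣ v i) :
    Pi.single z 1 ∈ orbit K v := by
  obtain hvz | hvz := ne_or_eq (v z) 0
  · exact single_mem_orbit_of_ne_zero hK hnorm hxy hxz hyz hv hprim hvz
  obtain ⟨i, hi⟩ := hprim 2 Nat.prime_two
  have hzi : z ≠ i := by rintro rfl; simp [hvz] at hi
  have hvi : v i ≠ 0 := by rintro h; simp [h] at hi
  rw [← orbit_smul (⟨𝐞 hzi (q : ℤ), hK _ dvd_rfl⟩ : K) v]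
  change _ ∈ orbit K (𝐞 hzi (q : ℤ) • v)
  rw [transvection_smul]
  refine single_mem_orbit_of_ne_zero hK hnorm hxy hxz hyz (hv.add_single z (dvd_mul_right _ _))
    (fun p hp => ?_) (by simp [hvz, hq, hvi])
  obtain ⟨j, hj⟩ := hprim p hp
  have hjz : j ≠ z := by rintro rfl; simp [hvz] at hj
  exact ⟨j, by simpa [hjz] using hj⟩

lemma smul_single_apply {R : Type*} [CommRing R] (g : SpecialLinearGroup ι R) (i j : ι) (t : R) :
    (g • (Pi.single j t : ι → R)) i = g i j * t := by
  rw [Matrix.SpecialLinearGroup.smul_def, Matrix.smul_eq_mulVec, Matrix.mulVec_single]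
  simp [mul_comm]

lemma exists_not_dvd_column (g : SpecialLinearGroup ι ℤ) (z : ι) {p : ℕ} (hp : p.Prime) :
    ∃ i, ¬ (p : ℤ) ∣ g i z := by
  by_contra! hall
  refine (Nat.prime_iff_prime_int.mp hp).not_dvd_one ?_
  rw [show (1 : ℤ) = (g⁻¹ * g) z z by simp, coe_mul, Matrix.mul_apply]
  exact Finset.dvd_sum fun i _ => (hall i).mul_left _

end ColumnReduction

section BlockReduction

variable {m q : ℕ}

lemma exists_mul_blockEmbedding_eq {K : Subgroup (SpecialLinearGroup (Fin (m + 1)) ℤ)}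
    (hK : ContainsElementary q K) {g : SpecialLinearGroup (Fin (m + 1)) ℤ}
    (hg : g ∈ congruenceSubgroup _ q)
    (col : g • (Pi.single (Fin.last m) 1 : Fin (m + 1) → ℤ) = Pi.single (Fin.last m) 1) :
    ∃ k ∈ K, ∃ A : SpecialLinearGroup (Fin m) ℤ, g * k = blockEmbedding m A := by
  have g_last : ∀ i, g i (Fin.last m) = (Pi.single (Fin.last m) 1 : Fin (m + 1) → ℤ) i :=
    fun i => by rw [← col, smul_single_apply, mul_one]
  obtain ⟨k, hk, hkv⟩ := hK.exists_smul_eq_add_single (Fin.last m)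
    (fun j => if j = Fin.last m then 0 else -g (Fin.last m) j) (fun j => by
      split_ifs with hj
      · exact dvd_zero _
      · simpa [Matrix.one_apply_ne (Ne.symm hj)] using mem_congruenceSubgroup.mp hg (Fin.last m) j)
    (Finset.univ.erase (Fin.last m)) (by simp)
  have entry : ∀ i j, (g * k) i j = g i j + (Pi.single (Fin.last m) 1 : Fin (m + 1) → ℤ) i *
      if j = Fin.last m then 0 else -g (Fin.last m) j := fun i j => by
    rw [← mul_one ((g * k) i j), ← smul_single_apply, mul_smul, hkv, smul_add, Pi.add_apply,
      smul_single_apply, smul_single_apply, mul_one, g_last]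
    simp +contextual [Pi.single_apply]
  obtain ⟨A, hA⟩ := exists_blockEmbedding_eq (g * k)
    (fun i => by simp [entry, g_last, (Fin.castSucc_lt_last i).ne])
    (fun i => by simp [entry, (Fin.castSucc_lt_last i).ne]) (by simp [entry, g_last])
  exact ⟨k, hk, A, hA.symm⟩

lemma mem_congruenceSubgroup_of_blockEmbedding_mem {A : SpecialLinearGroup (Fin m) ℤ}
    (hA : blockEmbedding m A ∈ congruenceSubgroup _ q) : A ∈ congruenceSubgroup _ q := by
  refine mem_congruenceSubgroup.mpr fun i j => ?_
  simpa [blockEmbedding_castSucc, Matrix.one_apply] using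
    mem_congruenceSubgroup.mp hA i.castSucc j.castSucc

lemma exists_mul_mul_eq_blockEmbedding {K : Subgroup (SpecialLinearGroup (Fin (m + 3)) ℤ)}
    (hq : q ≠ 0) (hK : ContainsElementary q K)
    (hnorm : ∀ (i j : Fin (m + 3)) (hij : i ≠ j),
      𝐞 hij (1 : ℤ) ∈ Subgroup.normalizer (K : Set _))
    {g : SpecialLinearGroup (Fin (m + 3)) ℤ} (hg : g ∈ congruenceSubgroup _ q) :
    ∃ k₁ ∈ K, ∃ k₂ ∈ K, ∃ A ∈ congruenceSubgroup (Fin (m + 2)) q,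
      k₁ * g * k₂ = blockEmbedding (m + 2) A := by
  have hKΓ : ContainsElementary q (K ⊓ congruenceSubgroup _ q) := fun _ _ hij _ ht =>
    ⟨hK hij ht, containsElementary_congruenceSubgroup hij ht⟩
  have hnormΓ : ∀ (i j : Fin (m + 3)) (hij : i ≠ j), 𝐞 hij (1 : ℤ) ∈
      Subgroup.normalizer ((K ⊓ congruenceSubgroup _ q : Subgroup _) : Set _) := fun i j hij =>
    Subgroup.inf_normalizer_le_normalizer_inf
      ⟨hnorm i j hij, by rw [Subgroup.normalizer_eq_top]; trivial⟩
  obtain ⟨⟨k₁, hk₁⟩, col⟩ := single_mem_orbit hq hKΓ hnormΓ (zero_ne_one : (0 : Fin (m + 3)) ≠ 1)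
    (Fin.last_pos.ne : (0 : Fin (m + 3)) ≠ Fin.last (m + 2)) (Fin.one_lt_last.ne)
    (v := g • Pi.single (Fin.last (m + 2)) 1)
    (fun i => by
      simpa [smul_single_apply, Pi.single_apply, Matrix.one_apply] using
        mem_congruenceSubgroup.mp hg i (Fin.last _))
    (fun p hp => by simpa [smul_single_apply] using exists_not_dvd_column g (Fin.last _) hp)
  replace col : (k₁ * g) • (Pi.single (Fin.last (m + 2)) 1 : Fin (m + 3) → ℤ) =
    Pi.single (Fin.last (m + 2)) 1 := (mul_smul k₁ g _).trans col
  have hk₁g := mul_mem hk₁.2 hg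
  obtain ⟨k₂, hk₂, A, hA⟩ := exists_mul_blockEmbedding_eq hKΓ hk₁g col
  exact ⟨k₁, hk₁.1, k₂, hk₂.1, A,
    mem_congruenceSubgroup_of_blockEmbedding_mem (hA ▸ mul_mem hk₁g hk₂.2), hA⟩

lemma congruenceSubgroup_le_of_le_comap_blockEmbedding
    {K : Subgroup (SpecialLinearGroup (Fin (m + 3)) ℤ)}
    (hq : q ≠ 0) (hK : ContainsElementary q K)
    (hnorm : ∀ (i j : Fin (m + 3)) (hij : i ≠ j),
      𝐞 hij (1 : ℤ) ∈ Subgroup.normalizer (K : Set _))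
    (hle : congruenceSubgroup _ q ≤ K.comap (blockEmbedding (m + 2))) :
    congruenceSubgroup _ q ≤ K := fun g hg => by
  obtain ⟨k₁, hk₁, k₂, hk₂, A, hA, h⟩ := exists_mul_mul_eq_blockEmbedding hq hK hnorm hg
  rw [← K.mul_mem_cancel_left hk₁, ← K.mul_mem_cancel_right hk₂, h]
  exact hle hA

lemma congruenceSubgroup_le_of_three (hq : q ≠ 0)
    (three : ∀ K : Subgroup (SpecialLinearGroup (Fin 3) ℤ), K.Normal → ContainsElementary q K →
      congruenceSubgroup _ q ≤ K) (m : ℕ) (K : Subgroup (SpecialLinearGroup (Fin (m + 3)) ℤ))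
    (hKn : K.Normal) (hK : ContainsElementary q K) : congruenceSubgroup _ q ≤ K := by
  induction m with
  | zero => exact three K hKn hK
  | succ m ih =>
    refine congruenceSubgroup_le_of_le_comap_blockEmbedding hq hK (fun _ _ _ => ?_)
      (ih _ (hKn.comap _) hK.comap_blockEmbedding)
    rw [Subgroup.normalizer_eq_top]
    trivial

lemma eq_top_of_containsElementary_one_fin_two (K : Subgroup (SpecialLinearGroup (Fin 2) ℤ))
    (hK : ContainsElementary 1 K) : K = ⊤ := by
  have hT : ModularGroup.T = 𝐞 (zero_ne_one : (0 : Fin 2) ≠ 1) (1 : ℤ) := by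
    apply Subtype.ext
    ext a b
    fin_cases a <;> fin_cases b <;> simp [ModularGroup.T, transvection_coe]
  have hS : ModularGroup.S = 𝐞 (zero_ne_one : (0 : Fin 2) ≠ 1) (-1 : ℤ) *
      𝐞 (one_ne_zero : (1 : Fin 2) ≠ 0) 1 * 𝐞 (zero_ne_one : (0 : Fin 2) ≠ 1) (-1) := by
    apply Subtype.ext
    ext a b
    fin_cases a <;> fin_cases b <;> simp [ModularGroup.S, transvection_coe, Matrix.mul_apply,
      Fin.sum_univ_two, Matrix.single_apply, Matrix.one_apply]
  have mem : ∀ {i j : Fin 2} (hij : i ≠ j) (t : ℤ), 𝐞 hij t ∈ K := fun hij t => hK hij (by simp)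
  rw [eq_top_iff, ← SpecialLinearGroup.SL2Z_generators, Subgroup.closure_le]
  rintro _ (rfl | rfl)
  · rw [hS]
    exact K.mul_mem (K.mul_mem (mem _ _) (mem _ _)) (mem _ _)
  · rw [hT]
    exact mem _ _

theorem eq_top_of_containsElementary_one (m : ℕ)
    (K : Subgroup (SpecialLinearGroup (Fin (m + 2)) ℤ)) (hK : ContainsElementary 1 K) :
    K = ⊤ := by
  induction m with
  | zero => exact eq_top_of_containsElementary_one_fin_two K hK
  | succ m ih =>
    have hΓ : congruenceSubgroup (Fin (m + 3)) 1 = ⊤ := by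
      ext g
      simp [mem_congruenceSubgroup]
    rw [eq_top_iff, ← hΓ]
    refine congruenceSubgroup_le_of_le_comap_blockEmbedding one_ne_zero hK
      (fun i j hij => Subgroup.le_normalizer (hK hij (by simp))) ?_
    rw [ih _ hK.comap_blockEmbedding]
    exact le_top

end BlockReduction

section MennickeMatrices

local notation "e₀₁" => 𝐞 (by decide : (0 : Fin 3) ≠ 1)
local notation "e₀₂" => 𝐞 (by decide : (0 : Fin 3) ≠ 2)
local notation "e₁₀" => 𝐞 (by decide : (1 : Fin 3) ≠ 0)
local notation "e₁₂" => 𝐞 (by decide : (1 : Fin 3) ≠ 2)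
local notation "e₂₀" => 𝐞 (by decide : (2 : Fin 3) ≠ 0)
local notation "e₂₁" => 𝐞 (by decide : (2 : Fin 3) ≠ 1)

lemma coe_transvection_fin_three {i j : Fin 3} (hij : i ≠ j) (t : ℤ) :
    (𝐞 hij t : Matrix (Fin 3) (Fin 3) ℤ) =
      !![1, if i = 0 ∧ j = 1 then t else 0, if i = 0 ∧ j = 2 then t else 0;
        if i = 1 ∧ j = 0 then t else 0, 1, if i = 1 ∧ j = 2 then t else 0;
        if i = 2 ∧ j = 0 then t else 0, if i = 2 ∧ j = 1 then t else 0, 1] := by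
  ext x y
  fin_cases i <;> fin_cases j <;> first | exact absurd rfl hij | skip
  all_goals fin_cases x <;> fin_cases y <;> simp [transvection_coe]

/-- The matrix `(a b; c d)` of `SL_2` in the first two coordinates of `SL_3`. -/
def blockZeroOne (a b c d : ℤ) (h : a * d - b * c = 1) : SpecialLinearGroup (Fin 3) ℤ :=
  ⟨!![a, b, 0; c, d, 0; 0, 0, 1], by simp [Matrix.det_fin_three, h]⟩

/-- The matrix `(a b; c d)` of `SL_2` in the first and last coordinates of `SL_3`. -/
def blockZeroTwo (a b c d : ℤ) (h : a * d - b * c = 1) : SpecialLinearGroup (Fin 3) ℤ :=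
  ⟨!![a, 0, b; 0, 1, 0; c, 0, d], by simp [Matrix.det_fin_three, h]⟩

lemma coe_blockZeroOne (a b c d : ℤ) (h : a * d - b * c = 1) :
    (blockZeroOne a b c d h : Matrix (Fin 3) (Fin 3) ℤ) = !![a, b, 0; c, d, 0; 0, 0, 1] := rfl

lemma coe_blockZeroTwo (a b c d : ℤ) (h : a * d - b * c = 1) :
    (blockZeroTwo a b c d h : Matrix (Fin 3) (Fin 3) ℤ) = !![a, 0, b; 0, 1, 0; c, 0, d] := rfl

lemma exists_mul_blockZeroOne_eq_blockZeroTwo_mul : ∃ w : SpecialLinearGroup (Fin 3) ℤ,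
    ∀ a b c d h, w * blockZeroOne a b c d h = blockZeroTwo a b c d h * w := by
  obtain ⟨w, hw⟩ : ∃ w : SpecialLinearGroup (Fin 3) ℤ,
      (w : Matrix (Fin 3) (Fin 3) ℤ) = !![1, 0, 0; 0, 0, -1; 0, 1, 0] :=
    ⟨⟨_, by simp [Matrix.det_fin_three]⟩, rfl⟩
  refine ⟨w, fun a b c d h => ?_⟩
  apply Subtype.ext
  rw [coe_mul, coe_mul, hw, coe_blockZeroOne, coe_blockZeroTwo]
  simp

lemma exists_mul_blockZeroOne_eq_blockZeroOne_neg_mul : ∃ w : SpecialLinearGroup (Fin 3) ℤ,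
    ∀ a b c d h h', w * blockZeroOne a b c d h = blockZeroOne a (-b) (-c) d h' * w := by
  obtain ⟨w, hw⟩ : ∃ w : SpecialLinearGroup (Fin 3) ℤ,
      (w : Matrix (Fin 3) (Fin 3) ℤ) = !![1, 0, 0; 0, -1, 0; 0, 0, -1] :=
    ⟨⟨_, by simp [Matrix.det_fin_three]⟩, rfl⟩
  refine ⟨w, fun a b c d h h' => ?_⟩
  apply Subtype.ext
  rw [coe_mul, coe_mul, hw, coe_blockZeroOne, coe_blockZeroOne]
  simp

variable {a b c d : ℤ} (h : a * d - b * c = 1) (t : ℤ)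

lemma blockZeroOne_eq_mul_of_row_eq {c' d' : ℤ} (h' : a * d' - b * c' = 1) :
    blockZeroOne a b c' d' h' = e₁₀ (c' * d - d' * c) * blockZeroOne a b c d h := by
  have hc' : c' = (c' * d - d' * c) * a + c := by linear_combination (-c') * h + c * h'
  have hd' : d' = (c' * d - d' * c) * b + d := by linear_combination (-d') * h + d * h'
  apply Subtype.ext
  simp only [coe_mul, coe_blockZeroOne, coe_transvection_fin_three, Matrix.mul_fin_three]
  simp [← hc', ← hd']

lemma e₁₀_mul_blockZeroOne (h' : (a + t * b) * (d - t * b) -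
      b * (c + t * d - t * (a + t * b)) = 1) :
    e₁₀ t * blockZeroOne (a + t * b) b (c + t * d - t * (a + t * b)) (d - t * b) h' =
      blockZeroOne a b c d h * e₁₀ t := by
  apply Subtype.ext
  simp only [coe_mul, coe_blockZeroOne, coe_transvection_fin_three, Matrix.mul_fin_three]
  ext i j
  fin_cases i <;> fin_cases j <;> simp <;> ring

lemma blockZeroOne_mul_e₀₁ (h' : a * (d + t * c) - (b + t * a) * c = 1) :
    blockZeroOne a b c d h * e₀₁ t = blockZeroOne a (b + t * a) c (d + t * c) h' := by
  apply Subtype.ext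
  simp only [coe_mul, coe_blockZeroOne, coe_transvection_fin_three, Matrix.mul_fin_three]
  ext i j
  fin_cases i <;> fin_cases j <;> simp <;> ring

lemma blockZeroOne_mul_e₀₂ : blockZeroOne a b c d h * e₀₂ t =
    e₁₂ (c * t) * e₀₂ ((a - 1) * t) * e₀₂ t * blockZeroOne a b c d h := by
  apply Subtype.ext
  simp only [coe_mul, coe_blockZeroOne, coe_transvection_fin_three, Matrix.mul_fin_three]
  ext i j
  fin_cases i <;> fin_cases j <;> simp
  ring

lemma blockZeroOne_mul_e₁₂ : blockZeroOne a b c d h * e₁₂ t =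
    e₀₂ (b * t) * e₁₂ ((d - 1) * t) * e₁₂ t * blockZeroOne a b c d h := by
  apply Subtype.ext
  simp only [coe_mul, coe_blockZeroOne, coe_transvection_fin_three, Matrix.mul_fin_three]
  ext i j
  fin_cases i <;> fin_cases j <;> simp
  ring

lemma e₂₀_mul_blockZeroOne : e₂₀ t * blockZeroOne a b c d h =
    blockZeroOne a b c d h * e₂₀ t * e₂₀ ((a - 1) * t) * e₂₁ (b * t) := by
  apply Subtype.ext
  simp only [coe_mul, coe_blockZeroOne, coe_transvection_fin_three, Matrix.mul_fin_three]
  ext i j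
  fin_cases i <;> fin_cases j <;> simp <;> ring

lemma e₂₁_mul_blockZeroOne : e₂₁ t * blockZeroOne a b c d h =
    blockZeroOne a b c d h * e₂₁ t * e₂₁ ((d - 1) * t) * e₂₀ (c * t) := by
  apply Subtype.ext
  simp only [coe_mul, coe_blockZeroOne, coe_transvection_fin_three, Matrix.mul_fin_three]
  ext i j
  fin_cases i <;> fin_cases j <;> simp <;> ring

/-- The matrix identity behind the multiplicativity of the Mennicke symbol. -/
lemma blockZeroTwo_mul_blockZeroOne {a₁ a₂ c₁ d₁ c₂ d₂ : ℤ} (h₁ : a₁ * d₁ - b * c₁ = 1)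
    (h₂ : a₂ * d₂ - b * c₂ = 1) (h : a₁ * a₂ * d - b * c = 1) :
    blockZeroTwo a₂ b c₂ d₂ h₂ * blockZeroOne a₁ b c₁ d₁ h₁ * e₂₁ (-a₂) =
      e₁₀ (c₁ * d) * e₂₀ (c₂ * a₁ * d - d₂ * c) * e₁₂ (1 - d₁) * e₂₁ (-1) * e₁₂ (1 - a₁) *
        blockZeroTwo (a₁ * a₂) b c d h := by
  apply Subtype.ext
  simp only [coe_mul, coe_blockZeroOne, coe_blockZeroTwo, coe_transvection_fin_three,
    Matrix.mul_fin_three]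
  ext i j
  fin_cases i <;> fin_cases j <;> simp
  · ring
  · ring
  · linear_combination (-c₁) * h + c * h₁
  · linear_combination d * h₁
  · linear_combination (-c₂ * a₁) * h + a₁ * c * h₂
  · linear_combination (-1) * h₂
  · linear_combination (-d₂) * h + a₁ * d * h₂

lemma eq_top_of_forall_e_mem (C : Subgroup (SpecialLinearGroup (Fin 3) ℤ))
    (h₀₂ : ∀ t, e₀₂ t ∈ C) (h₁₂ : ∀ t, e₁₂ t ∈ C) (h₂₀ : ∀ t, e₂₀ t ∈ C) (h₂₁ : ∀ t, e₂₁ t ∈ C) :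
    C = ⊤ := by
  have mem_of_mem {i j k : Fin 3} (hij : i ≠ j) (hjk : j ≠ k) (hik : i ≠ k) (t : ℤ)
      (h₁ : 𝐞 hij t ∈ C) (h₂ : 𝐞 hjk (1 : ℤ) ∈ C) : 𝐞 hik t ∈ C := by
    have h := C.mul_mem h₁ h₂
    rwa [transvection_mul_transvection hij hjk hik, mul_one, C.mul_mem_cancel_right h₁,
      C.mul_mem_cancel_right h₂] at h
  refine eq_top_of_containsElementary_one 1 C fun i j hij t _ => ?_
  fin_cases i <;> fin_cases j <;> first | exact absurd rfl hij | skip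
  exacts [mem_of_mem (by decide) (by decide) _ t (h₀₂ t) (h₂₁ 1), h₀₂ t,
    mem_of_mem (by decide) (by decide) _ t (h₁₂ t) (h₂₀ 1), h₁₂ t, h₂₀ t, h₂₁ t]

section MennickeSymbol

variable {G : Type*} [Group G] {σ : SpecialLinearGroup (Fin 3) ℤ →* G} {q : ℕ}

lemma ContainsElementary.map_transvection (hσ : ContainsElementary q σ.ker) {i j : Fin 3}
    (hij : i ≠ j) {t : ℤ} (ht : (q : ℤ) ∣ t) : σ (𝐞 hij t) = 1 :=
  hσ hij ht

/-- A pair `(a, b)` is admissible if it is the first row of a matrix in the level `q` congruence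
subgroup of `SL_2(ℤ)`. -/
structure IsAdmissible (q : ℕ) (a b : ℤ) : Prop where
  dvd_sub_one : (q : ℤ) ∣ a - 1
  dvd : (q : ℤ) ∣ b
  isCoprime : IsCoprime a b

/-- `(c, d)` completes an admissible pair `(a, b)` to a matrix in the level `q` congruence
subgroup of `SL_2(ℤ)`. -/
structure IsCompletion (q : ℕ) (a b c d : ℤ) : Prop where
  det : a * d - b * c = 1
  dvd : (q : ℤ) ∣ c
  dvd_sub_one : (q : ℤ) ∣ d - 1

lemma IsAdmissible.exists_isCompletion (hab : IsAdmissible q a b) :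
    ∃ c d, IsCompletion q a b c d := by
  obtain ⟨ha, -, u, v, h⟩ := hab
  refine ⟨v * (a - 1), u + v * b, by linear_combination h, ha.mul_left _, ?_⟩
  rw [show u + v * b - 1 = -u * (a - 1) by linear_combination h]
  exact ha.mul_left _

lemma isAdmissible_one (hb : (q : ℤ) ∣ b) : IsAdmissible q 1 b :=
  ⟨by simp, hb, isCoprime_one_left⟩

lemma IsAdmissible.mul {a₁ a₂ : ℤ} (h₁ : IsAdmissible q a₁ b) (h₂ : IsAdmissible q a₂ b) :
    IsAdmissible q (a₁ * a₂) b := by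
  refine ⟨?_, h₁.dvd, h₁.isCoprime.mul_left h₂.isCoprime⟩
  rw [show a₁ * a₂ - 1 = (a₁ - 1) * a₂ + (a₂ - 1) by ring]
  exact dvd_add (h₁.dvd_sub_one.mul_right _) h₂.dvd_sub_one

lemma IsAdmissible.pow (hab : IsAdmissible q a b) (k : ℕ) : IsAdmissible q (a ^ k) b := by
  induction k with
  | zero => exact pow_zero a ▸ isAdmissible_one hab.dvd
  | succ k ih => exact pow_succ a k ▸ ih.mul hab

lemma IsAdmissible.add_mul (hab : IsAdmissible q a b) (t : ℤ) : IsAdmissible q (a + t * b) b := by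
  refine ⟨?_, hab.dvd, IsCoprime.add_mul_right_left hab.isCoprime t⟩
  rw [add_sub_right_comm]
  exact dvd_add hab.dvd_sub_one (hab.dvd.mul_left _)

lemma commute_map_blockZeroOne (hσ : ContainsElementary q σ.ker) (hab : IsAdmissible q a b)
    (hcd : IsCompletion q a b c d) (g : SpecialLinearGroup (Fin 3) ℤ) :
    Commute (σ (blockZeroOne a b c d hcd.det)) (σ g) := by
  set B := blockZeroOne a b c d hcd.det
  suffices h : (Subgroup.centralizer {σ B}).comap σ = ⊤ by
    have hg : g ∈ (Subgroup.centralizer {σ B}).comap σ := h ▸ Subgroup.mem_top g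
    exact Subgroup.mem_centralizer_iff.mp hg _ rfl
  have mem_of_commute {k} (hk : Commute (σ B) (σ k)) : k ∈ (Subgroup.centralizer {σ B}).comap σ :=
    Subgroup.mem_centralizer_singleton_iff.mpr hk.symm
  refine eq_top_of_forall_e_mem _ (fun t => mem_of_commute ?_) (fun t => mem_of_commute ?_)
    (fun t => mem_of_commute (Commute.symm ?_)) (fun t => mem_of_commute (Commute.symm ?_)) <;>
    rw [commute_iff_eq, ← map_mul, ← map_mul]
  · simp only [B, blockZeroOne_mul_e₀₂, map_mul, one_mul,
      hσ.map_transvection _ (hcd.dvd.mul_right t),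
      hσ.map_transvection _ (hab.dvd_sub_one.mul_right t)]
  · simp only [B, blockZeroOne_mul_e₁₂, map_mul, one_mul,
      hσ.map_transvection _ (hab.dvd.mul_right t),
      hσ.map_transvection _ (hcd.dvd_sub_one.mul_right t)]
  · simp only [B, e₂₀_mul_blockZeroOne, map_mul, mul_one,
      hσ.map_transvection _ (hab.dvd.mul_right t),
      hσ.map_transvection _ (hab.dvd_sub_one.mul_right t)]
  · simp only [B, e₂₁_mul_blockZeroOne, map_mul, mul_one,
      hσ.map_transvection _ (hcd.dvd.mul_right t),
      hσ.map_transvection _ (hcd.dvd_sub_one.mul_right t)]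

open Classical in
/-- The Mennicke symbol of `(a, b)`: the image under `σ` of any matrix of the level `q` congruence
subgroup of `SL_2(ℤ)` with first row `(a, b)`. It does not depend on the matrix as soon as `σ`
kills the elementary matrices of level `q`. -/
noncomputable def mennickeSymbol (σ : SpecialLinearGroup (Fin 3) ℤ →* G) (q : ℕ) (a b : ℤ) : G :=
  if h : ∃ c d, IsCompletion q a b c d then
    σ (blockZeroOne a b h.choose h.choose_spec.choose h.choose_spec.choose_spec.det)
  else 1

lemma map_blockZeroOne (hσ : ContainsElementary q σ.ker) (hcd : IsCompletion q a b c d) :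
    σ (blockZeroOne a b c d hcd.det) = mennickeSymbol σ q a b := by
  have h : ∃ c d, IsCompletion q a b c d := ⟨c, d, hcd⟩
  have hcd' := h.choose_spec.choose_spec
  rw [mennickeSymbol, dif_pos h, blockZeroOne_eq_mul_of_row_eq hcd.det hcd'.det, map_mul,
    hσ.map_transvection _ (dvd_sub (hcd'.dvd.mul_right _) (hcd.dvd.mul_left _)), one_mul]

lemma commute_mennickeSymbol (hσ : ContainsElementary q σ.ker) (hab : IsAdmissible q a b)
    (g : SpecialLinearGroup (Fin 3) ℤ) : Commute (mennickeSymbol σ q a b) (σ g) := by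
  obtain ⟨c, d, hcd⟩ := hab.exists_isCompletion
  rw [← map_blockZeroOne hσ hcd]
  exact commute_map_blockZeroOne hσ hab hcd g

lemma map_blockZeroTwo (hσ : ContainsElementary q σ.ker) (hab : IsAdmissible q a b)
    (hcd : IsCompletion q a b c d) :
    σ (blockZeroTwo a b c d hcd.det) = mennickeSymbol σ q a b := by
  obtain ⟨w, hw⟩ := exists_mul_blockZeroOne_eq_blockZeroTwo_mul
  have h := congrArg σ (hw a b c d hcd.det)
  rw [map_mul, map_mul, map_blockZeroOne hσ hcd, ← (commute_mennickeSymbol hσ hab w).eq] at h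
  exact (mul_right_cancel h).symm

lemma mennickeSymbol_neg_right (hσ : ContainsElementary q σ.ker) (hab : IsAdmissible q a b) :
    mennickeSymbol σ q a (-b) = mennickeSymbol σ q a b := by
  obtain ⟨c, d, hcd⟩ := hab.exists_isCompletion
  have hcd' : IsCompletion q a (-b) (-c) d :=
    ⟨by rw [neg_mul_neg, hcd.det], hcd.dvd.neg_right, hcd.dvd_sub_one⟩
  obtain ⟨w, hw⟩ := exists_mul_blockZeroOne_eq_blockZeroOne_neg_mul
  have h := congrArg σ (hw a b c d hcd.det hcd'.det)
  rw [map_mul, map_mul, map_blockZeroOne hσ hcd, map_blockZeroOne hσ hcd',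
    ← (commute_mennickeSymbol hσ hab w).eq] at h
  exact (mul_right_cancel h).symm

lemma mennickeSymbol_add_mul_left (hσ : ContainsElementary q σ.ker) (hab : IsAdmissible q a b)
    (t : ℤ) : mennickeSymbol σ q (a + t * b) b = mennickeSymbol σ q a b := by
  obtain ⟨c, d, hcd⟩ := hab.exists_isCompletion
  have hcd' : IsCompletion q (a + t * b) b (c + t * d - t * (a + t * b)) (d - t * b) := by
    refine ⟨by linear_combination hcd.det, ?_, ?_⟩
    · rw [show c + t * d - t * (a + t * b) = c + t * (d - 1) - t * (a - 1) - t * t * b by ring]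
      exact dvd_sub (dvd_sub (dvd_add hcd.dvd (hcd.dvd_sub_one.mul_left _))
        (hab.dvd_sub_one.mul_left _)) (hab.dvd.mul_left _)
    · rw [sub_right_comm]
      exact dvd_sub hcd.dvd_sub_one (hab.dvd.mul_left _)
  have h := congrArg σ (e₁₀_mul_blockZeroOne hcd.det t hcd'.det)
  rw [map_mul, map_mul, map_blockZeroOne hσ hcd, map_blockZeroOne hσ hcd',
    (commute_mennickeSymbol hσ hab _).eq] at h
  exact mul_left_cancel h

lemma mennickeSymbol_add_mul_right (hσ : ContainsElementary q σ.ker) (hab : IsAdmissible q a b)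
    (t : ℤ) : mennickeSymbol σ q a (b + t * q * a) = mennickeSymbol σ q a b := by
  obtain ⟨c, d, hcd⟩ := hab.exists_isCompletion
  have hcd' : IsCompletion q a (b + t * q * a) c (d + t * q * c) := by
    refine ⟨by linear_combination hcd.det, hcd.dvd, ?_⟩
    rw [add_sub_right_comm]
    exact dvd_add hcd.dvd_sub_one (hcd.dvd.mul_left _)
  rw [← map_blockZeroOne hσ hcd, ← map_blockZeroOne hσ hcd',
    ← blockZeroOne_mul_e₀₁ hcd.det (t * q) hcd'.det, map_mul,
    hσ.map_transvection _ (dvd_mul_left _ _), mul_one]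

lemma mennickeSymbol_one_left (hσ : ContainsElementary q σ.ker) (hb : (q : ℤ) ∣ b) :
    mennickeSymbol σ q 1 b = 1 := by
  have hcd : IsCompletion q 1 b 0 1 := ⟨by ring, dvd_zero _, by simp⟩
  have h : blockZeroOne 1 b 0 1 hcd.det = e₀₁ b := by
    apply Subtype.ext
    simp [coe_blockZeroOne, coe_transvection_fin_three]
  rw [← map_blockZeroOne hσ hcd, h, hσ.map_transvection _ hb]

lemma mennickeSymbol_mul_left (hσ : ContainsElementary q σ.ker) {a₁ a₂ : ℤ}
    (h₁ : IsAdmissible q a₁ b) (h₂ : IsAdmissible q a₂ b) :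
    mennickeSymbol σ q (a₁ * a₂) b = mennickeSymbol σ q a₂ b * mennickeSymbol σ q a₁ b := by
  obtain ⟨c₁, d₁, hcd₁⟩ := h₁.exists_isCompletion
  obtain ⟨c₂, d₂, hcd₂⟩ := h₂.exists_isCompletion
  obtain ⟨c, d, hcd⟩ := (h₁.mul h₂).exists_isCompletion
  have map_e₂₁ : σ (e₂₁ (-a₂)) = σ (e₂₁ (-1)) := by
    rw [show -a₂ = -1 + (1 - a₂) by ring, transvection_add, map_mul,
      hσ.map_transvection _ (dvd_sub_comm.mp h₂.dvd_sub_one), mul_one]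
  have h := congrArg σ (blockZeroTwo_mul_blockZeroOne hcd₁.det hcd₂.det hcd.det)
  simp only [map_mul, map_blockZeroTwo hσ h₂ hcd₂, map_blockZeroTwo hσ (h₁.mul h₂) hcd,
    map_blockZeroOne hσ hcd₁, hσ.map_transvection _ (hcd₁.dvd.mul_right d),
    hσ.map_transvection _ (dvd_sub ((hcd₂.dvd.mul_right a₁).mul_right d) (hcd.dvd.mul_left d₂)),
    hσ.map_transvection _ (dvd_sub_comm.mp hcd₁.dvd_sub_one),
    hσ.map_transvection _ (dvd_sub_comm.mp h₁.dvd_sub_one), map_e₂₁, one_mul, mul_one] at h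
  rw [← (commute_mennickeSymbol hσ (h₁.mul h₂) _).eq] at h
  exact (mul_right_cancel h).symm

lemma mennickeSymbol_pow_left (hσ : ContainsElementary q σ.ker) (hab : IsAdmissible q a b)
    (k : ℕ) : mennickeSymbol σ q (a ^ k) b = mennickeSymbol σ q a b ^ k := by
  induction k with
  | zero => rw [pow_zero, pow_zero, mennickeSymbol_one_left hσ hab.dvd]
  | succ k ih => rw [pow_succ, mennickeSymbol_mul_left hσ (hab.pow k) hab, ih, ← pow_succ']

end MennickeSymbol

end MennickeMatrices

section VanishingOfMennickeSymbols

lemma exists_prime_gt_dvd_sub {m r : ℤ} (hm : m ≠ 0) (hr : r ≠ 0) (hmr : IsCoprime m r) {x y : ℤ}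
    (hx : IsCoprime x m) (hy : IsCoprime y r) (N : ℕ) :
    ∃ p > N, p.Prime ∧ m ∣ p - x ∧ r ∣ p - y := by
  obtain ⟨u, v, huv⟩ := hmr
  obtain ⟨z, ⟨s, hs⟩, ⟨t, ht⟩⟩ : ∃ z, m ∣ z - x ∧ r ∣ z - y :=
    ⟨x * (v * r) + y * (u * m), ⟨u * (y - x), by linear_combination x * huv⟩,
      ⟨v * (x - y), by linear_combination y * huv⟩⟩
  have hz : IsCoprime z ((m * r).natAbs : ℤ) := by
    rw [Int.natCast_natAbs, IsCoprime.abs_right_iff]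
    refine IsCoprime.mul_right ?_ ?_
    · rw [show z = x + m * s by linear_combination hs]
      exact hx.add_mul_left_left s
    · rw [show z = y + r * t by linear_combination ht]
      exact hy.add_mul_left_left t
  obtain ⟨p, hpN, hp, hpz⟩ := Nat.forall_exists_prime_gt_and_zmodEq N
    (Int.natAbs_ne_zero.mpr (mul_ne_zero hm hr)) hz
  have hd : m * r ∣ p - z := Int.natAbs_dvd.mp hpz.symm.dvd
  refine ⟨p, hpN, hp, ?_, ?_⟩
  · simpa using dvd_add ((dvd_mul_right m r).trans hd) ⟨s, hs⟩
  · simpa using dvd_add ((dvd_mul_left r m).trans hd) ⟨t, ht⟩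

lemma isCoprime_units_mul_right {a b : ℤ} (hab : IsCoprime a b) (ε : ℤˣ) : IsCoprime a (ε * b) :=
  (isCoprime_mul_unit_left_right ε.isUnit a b).mpr hab

lemma exists_units_jacobiSym_mul_eq {b : ℤ} {m : ℕ} (hb : b.gcd m = 1) (hm : m % 4 = 3) (s : ℤˣ) :
    ∃ ε : ℤˣ, jacobiSym (ε * b) m = s := by
  have hneg : jacobiSym (-b) m = -jacobiSym b m := by
    rw [jacobiSym.neg b (Nat.odd_iff.mpr (by lia)), ZMod.χ₄_nat_three_mod_four hm, neg_one_mul]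
  rcases jacobiSym.eq_one_or_neg_one hb with h | h
  · rcases Int.units_eq_one_or s with rfl | rfl
    · exact ⟨1, by simpa using h⟩
    · exact ⟨-1, by simp [hneg, h]⟩
  · rcases Int.units_eq_one_or s with rfl | rfl
    · exact ⟨-1, by simp [hneg, h]⟩
    · exact ⟨1, by simpa using h⟩

/-- By quadratic reciprocity, the Jacobi symbol in the conclusion depends only on the residue
class of `p` modulo `a` and changes sign with `ε`. -/
lemma exists_units_forall_jacobiSym_eq_one {a b : ℤ} (hab : IsCoprime a b)
    (ha : a.natAbs % 4 = 3) :
    ∃ ε : ℤˣ, ∀ p : ℕ, p % 4 = 3 → a ∣ p - ε * b → jacobiSym a p = 1 := by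
  have hgcd : b.gcd a.natAbs = 1 := by
    rw [← Int.isCoprime_iff_gcd_eq_one, Int.natCast_natAbs, IsCoprime.abs_right_iff]
    exact hab.symm
  have hmod {ε : ℤˣ} {p : ℕ} (hp : a ∣ p - ε * b) :
      jacobiSym p a.natAbs = jacobiSym (ε * b) a.natAbs :=
    jacobiSym.mod_left' (Int.modEq_iff_dvd.mpr (Int.natAbs_dvd.mpr hp)).symm
  rcases Int.natAbs_eq a with hpos | hneg
  · obtain ⟨ε, hε⟩ := exists_units_jacobiSym_mul_eq hgcd ha (-1)
    refine ⟨ε, fun p hp hd => ?_⟩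
    rw [hpos, jacobiSym.quadratic_reciprocity_three_mod_four ha hp, hmod hd, hε, Units.val_neg,
      Units.val_one, neg_neg]
  · obtain ⟨ε, hε⟩ := exists_units_jacobiSym_mul_eq hgcd ha 1
    refine ⟨ε, fun p hp hd => ?_⟩
    rw [hneg, jacobiSym.neg _ (Nat.odd_iff.mpr (by lia)), ZMod.χ₄_nat_three_mod_four hp,
      jacobiSym.quadratic_reciprocity_three_mod_four ha hp, hmod hd, hε, Units.val_one,
      neg_mul_neg, one_mul]

lemma exists_units_not_dvd_mul_sub_one {r : ℕ} (hr : 2 < r) (b : ℤ) :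
    ∃ ε : ℤˣ, ¬ (r : ℤ) ∣ ε * b - 1 := by
  by_contra! h
  have h2 : (r : ℤ) ∣ 2 := by
    have h := dvd_add (h 1) (h (-1))
    rwa [Units.val_neg, Units.val_one, show (1 * b - 1 + (-1 * b - 1) : ℤ) = -2 by ring,
      dvd_neg] at h
  have := Int.le_of_dvd two_pos h2
  lia

lemma exists_prime_gt_not_dvd_sub_one {a b : ℤ} (ha : a ≠ 0) (hab : IsCoprime a b) {r : ℕ}
    (hr : r.Prime) (hr2 : 2 < r) (N : ℕ) :
    ∃ p > N, p.Prime ∧ ¬ r ∣ p - 1 ∧ ∃ ε : ℤˣ, a ∣ p - ε * b := by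
  have hrZ : Prime (r : ℤ) := Nat.prime_iff_prime_int.mp hr
  have cast_dvd {p : ℕ} (hp : p.Prime) (h : r ∣ p - 1) : (r : ℤ) ∣ (p : ℤ) - 1 := by
    rw [← Nat.cast_one, ← Nat.cast_sub hp.one_le]
    exact Int.natCast_dvd_natCast.mpr h
  by_cases hra : (r : ℤ) ∣ a
  · obtain ⟨ε, hε⟩ := exists_units_not_dvd_mul_sub_one hr2 b
    obtain ⟨p, hpN, hp, hpa, -⟩ := exists_prime_gt_dvd_sub ha one_ne_zero isCoprime_one_right
      (isCoprime_units_mul_right hab ε).symm (isCoprime_one_right (x := 0)) N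
    refine ⟨p, hpN, hp, fun h => hε ?_, ε, hpa⟩
    simpa using dvd_sub (cast_dvd hp h) (hra.trans hpa)
  · obtain ⟨p, hpN, hp, hpa, hpr⟩ := exists_prime_gt_dvd_sub ha hrZ.ne_zero
      ((hrZ.coprime_iff_not_dvd.mpr hra).symm) (isCoprime_units_mul_right hab 1).symm
      ((hrZ.coprime_iff_not_dvd (n := 2)).mpr
        fun h => by have := Int.le_of_dvd two_pos h; lia).symm N
    refine ⟨p, hpN, hp, fun h => hrZ.not_dvd_one ?_, 1, hpa⟩
    simpa [show (p - 1 - (p - 2) : ℤ) = 1 by ring] using dvd_sub (cast_dvd hp h) hpr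

variable {G : Type*} [Group G] {σ : SpecialLinearGroup (Fin 3) ℤ →* G} {q : ℕ} {a b : ℤ}

lemma mennickeSymbol_units_mul_right (hσ : ContainsElementary q σ.ker)
    (hab : IsAdmissible q a b) (ε : ℤˣ) :
    mennickeSymbol σ q a (ε * b) = mennickeSymbol σ q a b := by
  rcases Int.units_eq_one_or ε with rfl | rfl
  · rw [Units.val_one, one_mul]
  · rw [Units.val_neg, Units.val_one, neg_one_mul, mennickeSymbol_neg_right hσ hab]

lemma mennickeSymbol_pow_eq_one (hσ : ContainsElementary q σ.ker) (hq : q ≠ 0)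
    (hab : IsAdmissible q a (q * b)) {p : ℕ} (hp : p.Prime) (hqp : q < p) {ε : ℤˣ}
    (hd : a ∣ p - ε * b) {k : ℕ} (hk : (p : ℤ) ∣ a ^ k - 1) :
    mennickeSymbol σ q a (q * b) ^ k = 1 := by
  obtain ⟨t, ht⟩ := hd
  have hε : IsAdmissible q a (ε * (q * b)) :=
    ⟨hab.dvd_sub_one, (hab.dvd).mul_left _, isCoprime_units_mul_right hab.isCoprime ε⟩
  have hqp_eq : (q * p : ℤ) = ε * (q * b) + t * q * a := by linear_combination (q : ℤ) * ht
  have hadm : IsAdmissible q a (q * p) :=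
    ⟨hab.dvd_sub_one, dvd_mul_right _ _, hqp_eq ▸ hε.isCoprime.add_mul_right_right _⟩
  have hcop : IsCoprime (q : ℤ) p := Nat.isCoprime_iff_coprime.mpr
    (hp.coprime_iff_not_dvd.mpr (Nat.not_dvd_of_pos_of_lt (Nat.pos_of_ne_zero hq) hqp)).symm
  obtain ⟨s, hs⟩ := hcop.mul_dvd (hadm.pow k).dvd_sub_one hk
  rw [← mennickeSymbol_units_mul_right hσ hab ε, ← mennickeSymbol_add_mul_right hσ hε t, ← hqp_eq,
    ← mennickeSymbol_pow_left hσ hadm, show a ^ k = 1 + s * (q * p) by linear_combination hs,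
    mennickeSymbol_add_mul_left hσ (isAdmissible_one hadm.dvd),
    mennickeSymbol_one_left hσ hadm.dvd]

lemma exists_odd_mennickeSymbol_pow_eq_one (hσ : ContainsElementary q σ.ker) (hq : q ≠ 0)
    (hab : IsAdmissible q a (q * b)) (ha : a.natAbs % 4 = 3) :
    ∃ k : ℕ, ¬ 2 ∣ k ∧ mennickeSymbol σ q a (q * b) ^ k = 1 := by
  have hcop : IsCoprime a b := hab.isCoprime.of_mul_right_right
  have ha4 : IsCoprime a 4 := by
    rw [Int.isCoprime_iff_gcd_eq_one, show (4 : ℤ) = 2 * 2 by rfl, ← Int.isCoprime_iff_gcd_eq_one]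
    have : IsCoprime a 2 := (Int.isCoprime_two_right).mpr (Int.odd_iff.mpr (by lia))
    exact this.mul_right this
  obtain ⟨ε, hε⟩ := exists_units_forall_jacobiSym_eq_one hcop ha
  obtain ⟨p, hqp, hp, hpa, hp3⟩ := exists_prime_gt_dvd_sub (by lia : a ≠ 0) four_ne_zero ha4
    (isCoprime_units_mul_right hcop ε).symm (y := 3) ⟨-1, 1, by norm_num⟩ q
  have hp4 : p % 4 = 3 := by lia
  have : Fact p.Prime := ⟨hp⟩
  refine ⟨p / 2, by lia, mennickeSymbol_pow_eq_one hσ hq hab hp hqp hpa ?_⟩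
  have euler := legendreSym.eq_pow p a
  rw [jacobiSym.legendreSym.to_jacobiSym, hε p hp4 hpa, Int.cast_one] at euler
  rw [← ZMod.intCast_zmod_eq_zero_iff_dvd, Int.cast_sub, Int.cast_pow, ← euler, Int.cast_one,
    sub_self]

lemma exists_not_dvd_mennickeSymbol_pow_eq_one (hσ : ContainsElementary q σ.ker) (hq : q ≠ 0)
    (hab : IsAdmissible q a (q * b)) (ha : a ≠ 0) {r : ℕ} (hr : r.Prime) (hr2 : 2 < r) :
    ∃ k : ℕ, ¬ r ∣ k ∧ mennickeSymbol σ q a (q * b) ^ k = 1 := by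
  have hcop : IsCoprime a b := hab.isCoprime.of_mul_right_right
  obtain ⟨p, hqp, hp, hrp, ε, t, ht⟩ := exists_prime_gt_not_dvd_sub_one ha hcop hr hr2 q
  refine ⟨p - 1, hrp, mennickeSymbol_pow_eq_one hσ hq hab hp hqp ⟨t, ht⟩ ?_⟩
  have hap : IsCoprime a p := by
    rw [show (p : ℤ) = ε * b + a * t by linear_combination ht]
    exact (isCoprime_units_mul_right hcop ε).add_mul_left_right t
  exact (Int.ModEq.pow_card_sub_one_eq_one hp hap).symm.dvd

lemma mennickeSymbol_eq_one_of_natAbs_mod_four (hσ : ContainsElementary q σ.ker) (hq : q ≠ 0)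
    (hab : IsAdmissible q a b) (ha : a.natAbs % 4 = 3) : mennickeSymbol σ q a b = 1 := by
  obtain ⟨b, rfl⟩ := hab.dvd
  rw [← orderOf_eq_one_iff]
  by_contra h
  obtain ⟨r, hr, hrd⟩ := Nat.exists_prime_and_dvd h
  obtain ⟨k, hk, hk1⟩ : ∃ k : ℕ, ¬ r ∣ k ∧ mennickeSymbol σ q a (q * b) ^ k = 1 := by
    rcases hr.two_le.eq_or_lt with rfl | hr2
    · exact exists_odd_mennickeSymbol_pow_eq_one hσ hq hab ha
    · exact exists_not_dvd_mennickeSymbol_pow_eq_one hσ hq hab (by lia) hr hr2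
  exact hk (hrd.trans (orderOf_dvd_of_pow_eq_one hk1))

lemma exists_natAbs_add_mul_mod_four (ha : a % 2 = 1) (hb : b ≠ 0) :
    ∃ t : ℤ, (a + t * b).natAbs % 4 = 3 := by
  have habs : |a| ≤ |a| * (b * b) :=
    le_mul_of_one_le_right (abs_nonneg a) (by have := mul_self_pos.mpr hb; lia)
  have := neg_abs_le a
  have := le_abs_self a
  by_cases h3 : a % 4 = 3
  · refine ⟨4 * b * |a|, ?_⟩
    rw [show a + 4 * b * |a| * b = a + 4 * (|a| * (b * b)) by ring]
    lia
  · refine ⟨-4 * b * |a|, ?_⟩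
    rw [show a + -4 * b * |a| * b = a - 4 * (|a| * (b * b)) by ring]
    lia

lemma mennickeSymbol_eq_one_of_ne_zero (hσ : ContainsElementary q σ.ker) (hq : q ≠ 0)
    (hab : IsAdmissible q a b) (hb : b ≠ 0) : mennickeSymbol σ q a b = 1 := by
  have of_odd {a : ℤ} (hab : IsAdmissible q a b) (ha : a % 2 = 1) :
      mennickeSymbol σ q a b = 1 := by
    obtain ⟨t, ht⟩ := exists_natAbs_add_mul_mod_four ha hb
    rw [← mennickeSymbol_add_mul_left hσ hab t]
    exact mennickeSymbol_eq_one_of_natAbs_mod_four hσ hq (hab.add_mul t) ht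
  by_cases ha : a % 2 = 1
  · exact of_odd hab ha
  · have hb2 : b % 2 = 1 := by
      by_contra hb2
      exact absurd (hab.isCoprime.isUnit_of_dvd' (x := 2) (by lia) (by lia)) (by decide)
    rw [← mennickeSymbol_add_mul_left hσ hab 1]
    exact of_odd (hab.add_mul 1) (by lia)

theorem mennickeSymbol_eq_one (hσ : ContainsElementary q σ.ker) (hq : q ≠ 0)
    (hab : IsAdmissible q a b) : mennickeSymbol σ q a b = 1 := by
  by_cases hb : b = 0
  · have ha : a ≠ 0 := by
      rintro rfl
      simpa [hb, isCoprime_zero_left] using hab.isCoprime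
    rw [← mennickeSymbol_add_mul_right hσ hab 1]
    refine mennickeSymbol_eq_one_of_ne_zero hσ hq ⟨hab.dvd_sub_one, ?_, ?_⟩ (by simp [hb, ha, hq])
    · exact dvd_add hab.dvd ((dvd_mul_left _ _).mul_right _)
    · exact hab.isCoprime.add_mul_right_right _
  · exact mennickeSymbol_eq_one_of_ne_zero hσ hq hab hb

end VanishingOfMennickeSymbols

lemma blockEmbedding_two_eq_blockZeroOne (A : SpecialLinearGroup (Fin 2) ℤ)
    (h : A 0 0 * A 1 1 - A 0 1 * A 1 0 = 1) :
    blockEmbedding 2 A = blockZeroOne (A 0 0) (A 0 1) (A 1 0) (A 1 1) h := by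
  refine Subtype.ext (blockMatrix_eq_of _ _ (fun i j => ?_) (fun i => ?_) (fun j => ?_) rfl)
  · fin_cases i <;> fin_cases j <;> rfl
  · fin_cases i <;> rfl
  · fin_cases j <;> rfl

/-- The congruence subgroup theorem of Bass–Lazard–Serre and Mennicke. -/
theorem congruenceSubgroup_le_of_containsElementary {q : ℕ} (hq : q ≠ 0) (m : ℕ)
    (K : Subgroup (SpecialLinearGroup (Fin (m + 3)) ℤ)) (hKn : K.Normal)
    (hK : ContainsElementary q K) : congruenceSubgroup _ q ≤ K := by
  refine congruenceSubgroup_le_of_three hq (fun K hKn hK g hg => ?_) m K hKn hK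
  obtain ⟨k₁, hk₁, k₂, hk₂, A, hA, h⟩ := exists_mul_mul_eq_blockEmbedding (m := 0) hq hK
    (fun i j hij => by simp [Subgroup.normalizer_eq_top K]) hg
  have hσ : ContainsElementary q (QuotientGroup.mk' K).ker := by rwa [QuotientGroup.ker_mk']
  have hdet : A 0 0 * A 1 1 - A 0 1 * A 1 0 = 1 := by
    rw [← Matrix.det_fin_two, A.det_coe]
  rw [mem_congruenceSubgroup] at hA
  have hcompl : IsCompletion q (A 0 0) (A 0 1) (A 1 0) (A 1 1) :=
    ⟨hdet, by simpa using hA 1 0, by simpa using hA 1 1⟩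
  have hadm : IsAdmissible q (A 0 0) (A 0 1) :=
    ⟨by simpa using hA 0 0, by simpa using hA 0 1, A 1 1, -A 1 0, by linear_combination hdet⟩
  have hblock : blockEmbedding 2 A ∈ K := by
    rw [← QuotientGroup.eq_one_iff, ← QuotientGroup.mk'_apply,
      blockEmbedding_two_eq_blockZeroOne A hdet, map_blockZeroOne hσ hcompl,
      mennickeSymbol_eq_one hσ hq hadm]
  rwa [← h, K.mul_mem_cancel_right hk₂, K.mul_mem_cancel_left hk₁] at hblock

section SteinbergLieRelations

variable {ι K L : Type*} [LieRing L]

/-- A family of elements of a Lie ring satisfying the Steinberg relations between the elementary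
matrices `E_ij`, `i ≠ j`. The diagonal members are irrelevant. -/
structure IsSteinbergFamily (X : ι → ι → L) : Prop where
  lie_eq : ∀ ⦃i j k⦄, i ≠ j → j ≠ k → i ≠ k → ⁅X i j, X j k⁆ = X i k
  lie_eq_zero : ∀ ⦃i j k l⦄, i ≠ j → k ≠ l → i ≠ l → j ≠ k → ⁅X i j, X k l⁆ = 0

/-- The coroot `[X_ij, X_ji]`, corresponding to the diagonal matrix `E_ii - E_jj`. -/
def coroot (X : ι → ι → L) (i j : ι) : L := ⁅X i j, X j i⁆

variable {X : ι → ι → L} {i j k l m : ι}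

lemma coroot_swap (X : ι → ι → L) (i j : ι) : coroot X i j = -coroot X j i :=
  (lie_skew _ _).symm

lemma coroot_self (X : ι → ι → L) (i : ι) : coroot X i i = 0 := lie_self _

namespace IsSteinbergFamily

lemma lie_eq_neg (hX : IsSteinbergFamily X) (hij : i ≠ j) (hjk : j ≠ k) (hik : i ≠ k) :
    ⁅X j k, X i j⁆ = -X i k := by
  rw [← lie_skew, hX.lie_eq hij hjk hik]

lemma coroot_lie_row (hX : IsSteinbergFamily X) (hkm : k ≠ m) (hkj : k ≠ j) (hmj : m ≠ j) :
    ⁅coroot X k m, X k j⁆ = X k j := by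
  rw [coroot, lie_lie, hX.lie_eq hkm.symm hkj hmj, hX.lie_eq hkm hmj hkj,
    hX.lie_eq_zero hkm hkj hkj hkm.symm, lie_zero, sub_zero]

lemma coroot_lie_col (hX : IsSteinbergFamily X) (hkm : k ≠ m) (hki : k ≠ i) (hmi : m ≠ i) :
    ⁅coroot X k m, X i k⁆ = -X i k := by
  rw [coroot, lie_lie, hX.lie_eq_zero hkm.symm hki.symm hkm.symm hki,
    hX.lie_eq_neg hki.symm hkm hmi.symm, lie_zero, zero_sub, lie_neg, neg_neg,
    hX.lie_eq_neg hmi.symm hkm.symm hki.symm]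

lemma coroot_lie_row' (hX : IsSteinbergFamily X) (hkm : k ≠ m) (hkj : k ≠ j) (hmj : m ≠ j) :
    ⁅coroot X k m, X m j⁆ = -X m j := by
  rw [coroot_swap, neg_lie, hX.coroot_lie_row hkm.symm hmj hkj]

lemma coroot_lie_col' (hX : IsSteinbergFamily X) (hkm : k ≠ m) (hki : k ≠ i) (hmi : m ≠ i) :
    ⁅coroot X k m, X i m⁆ = X i m := by
  rw [coroot_swap, neg_lie, hX.coroot_lie_col hkm.symm hmi hki, neg_neg]

lemma coroot_lie_self (hX : IsSteinbergFamily X) (third : ∀ a b : ι, ∃ c, c ≠ a ∧ c ≠ b)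
    (hkm : k ≠ m) : ⁅coroot X k m, X k m⁆ = (2 : ℤ) • X k m := by
  obtain ⟨p, hpk, hpm⟩ := third k m
  have hp := hX.lie_eq hpk.symm hpm hkm
  rw [← hp, leibniz_lie, hX.coroot_lie_row hkm hpk.symm hpm.symm,
    hX.coroot_lie_col' hkm hpk.symm hpm.symm, hp, two_smul]

variable [DecidableEq ι]

lemma coroot_lie (hX : IsSteinbergFamily X) (third : ∀ a b : ι, ∃ c, c ≠ a ∧ c ≠ b)
    (k m : ι) (hij : i ≠ j) :
    ⁅coroot X k m, X i j⁆ = (((if k = i then 1 else 0) - (if k = j then 1 else 0)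
      - (if m = i then 1 else 0) + (if m = j then 1 else 0) : ℤ)) • X i j := by
  rcases eq_or_ne k m with rfl | hkm
  · simp [coroot_self]
  rcases eq_or_ne k i with rfl | hki
  · rcases eq_or_ne m j with rfl | hmj
    · simp [hX.coroot_lie_self third hkm, hkm, hkm.symm]
    · simp [hX.coroot_lie_row hkm hij hmj, hij, hkm.symm, hmj]
  rcases eq_or_ne m i with rfl | hmi
  · rcases eq_or_ne k j with rfl | hkj
    · rw [coroot_swap, neg_lie, hX.coroot_lie_self third hij]
      simp [hij, hkm]
    · simp [hX.coroot_lie_row' hkm hkj hij, hij, hkm, hkj]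
  rcases eq_or_ne k j with rfl | hkj
  · simp [hX.coroot_lie_col hkm hki hmi, hkm.symm, hki, hmi]
  rcases eq_or_ne m j with rfl | hmj
  · simp [hX.coroot_lie_col' hkm hki hmi, hkm, hki, hmi]
  · simp [coroot, lie_lie, hX.lie_eq_zero hkm.symm hij hmj hki, hX.lie_eq_zero hkm hij hkj hmi,
      hki, hkj, hmi, hmj]

omit [DecidableEq ι] in
lemma coroot_sub_coroot (hX : IsSteinbergFamily X) (hij : i ≠ j) (k : ι) :
    coroot X i k - coroot X j k = coroot X i j := by
  rcases eq_or_ne i k with rfl | hik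
  · rw [coroot_self, zero_sub, ← coroot_swap]
  rcases eq_or_ne j k with rfl | hjk
  · rw [coroot_self, sub_zero]
  rw [coroot.eq_def X i j, ← hX.lie_eq hik hjk.symm hij, lie_lie,
    hX.lie_eq hjk.symm hij.symm hik.symm, hX.lie_eq_neg hij.symm hik hjk, lie_neg,
    sub_neg_eq_add, ← coroot, ← coroot, coroot_swap X j k, sub_neg_eq_add]

end IsSteinbergFamily

variable [Field K] [LieAlgebra K L] [Fintype ι]

variable (K) in
/-- The element `n⁻¹ ∑ₘ [X_km, X_mk]`, corresponding to the diagonal matrix `E_kk - n⁻¹ • 1`. -/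
noncomputable def diagElement (X : ι → ι → L) (k : ι) : L :=
  (Fintype.card ι : K)⁻¹ • ∑ m, coroot X k m

variable [DecidableEq ι]

variable (K) in
/-- The linear map sending `E_ij` to `X_ij` for `i ≠ j` and `E_kk` to `diagElement K X k`. It kills
the scalar matrices and restricts to a Lie algebra map on `sl_n` if `X` is a Steinberg family. -/
noncomputable def matrixLift (X : ι → ι → L) : Matrix ι ι K →ₗ[K] L :=
  (Matrix.stdBasis K ι ι).constr K fun p => if p.1 = p.2 then diagElement K X p.1 else X p.1 p.2

lemma matrixLift_single (X : ι → ι → L) (k l : ι) :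
    matrixLift K X (Matrix.single k l 1) = if k = l then diagElement K X k else X k l := by
  rw [← Matrix.stdBasis_eq_single, matrixLift, Module.Basis.constr_basis]

lemma matrixLift_single_of_ne (X : ι → ι → L) (hij : i ≠ j) :
    matrixLift K X (Matrix.single i j 1) = X i j := by
  rw [matrixLift_single, if_neg hij]

namespace IsSteinbergFamily

variable [CharZero K]

omit [DecidableEq ι] in
lemma diagElement_sub_diagElement (hX : IsSteinbergFamily X) (hij : i ≠ j) :
    diagElement K X i - diagElement K X j = coroot X i j := by
  have : Nonempty ι := ⟨i⟩
  have hn : (Fintype.card ι : K) ≠ 0 := Nat.cast_ne_zero.mpr Fintype.card_ne_zero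
  rw [diagElement, diagElement, ← smul_sub, ← Finset.sum_sub_distrib,
    Finset.sum_congr rfl fun m _ => hX.coroot_sub_coroot hij m, Finset.sum_const,
    Finset.card_univ, ← Nat.cast_smul_eq_nsmul K, inv_smul_smul₀ hn]

lemma lie_diagElement (hX : IsSteinbergFamily X) (third : ∀ a b : ι, ∃ c, c ≠ a ∧ c ≠ b)
    (k : ι) (hij : i ≠ j) : ⁅X i j, diagElement K X k⁆ =
      (if j = k then X i j else 0) - (if k = i then X i j else 0) := by
  have : Nonempty ι := ⟨i⟩
  have hn : (Fintype.card ι : K) ≠ 0 := Nat.cast_ne_zero.mpr Fintype.card_ne_zero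
  have hsum : ∑ m, ⁅coroot X k m, X i j⁆ = (Fintype.card ι : K) •
      ((if k = i then X i j else 0) - (if j = k then X i j else 0)) := by
    rw [Finset.sum_congr rfl fun m _ => hX.coroot_lie third k m hij, ← Finset.sum_smul,
      Nat.cast_smul_eq_nsmul, ← natCast_zsmul]
    simp only [Finset.sum_add_distrib, Finset.sum_sub_distrib, Finset.sum_const, Finset.card_univ,
      Finset.sum_ite_eq', Finset.mem_univ, if_true, nsmul_eq_mul, sub_add_cancel, mul_smul,
      sub_smul, eq_comm (a := j)]
    split_ifs <;> simp
  rw [← lie_skew, diagElement, smul_lie, _root_.sum_lie, hsum, inv_smul_smul₀ hn, neg_sub]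

lemma lie_matrixLift_single (hX : IsSteinbergFamily X) (third : ∀ a b : ι, ∃ c, c ≠ a ∧ c ≠ b)
    (k l : ι) (hij : i ≠ j) : ⁅X i j, matrixLift K X (Matrix.single k l 1)⁆ =
      (if j = k then matrixLift K X (Matrix.single i l 1) else 0) -
        (if l = i then matrixLift K X (Matrix.single k j 1) else 0) := by
  simp only [matrixLift_single]
  rcases eq_or_ne k l with rfl | hkl
  · rw [if_pos rfl, hX.lie_diagElement third k hij]
    congr 1 <;> split_ifs <;> simp_all
  rw [if_neg hkl]
  rcases eq_or_ne j k with rfl | hjk <;> rcases eq_or_ne l i with rfl | hli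
  · simpa [coroot] using (hX.diagElement_sub_diagElement (K := K) hij).symm
  · simp [hX.lie_eq hij hkl hli.symm, hli, hli.symm]
  · simp [hX.lie_eq_neg hkl hij hjk.symm, hjk, hjk.symm]
  · simp [hX.lie_eq_zero hij hkl hli.symm hjk, hjk, hli]

theorem matrixLift_mul_sub_mul (hX : IsSteinbergFamily X)
    (third : ∀ a b : ι, ∃ c, c ≠ a ∧ c ≠ b) (hij : i ≠ j) (M : Matrix ι ι K) :
    matrixLift K X (Matrix.single i j 1 * M - M * Matrix.single i j 1) =
      ⁅X i j, matrixLift K X M⁆ := by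
  induction M using Matrix.induction_on' with
  | h_zero => simp
  | h_add M N hM hN =>
    rw [mul_add, add_mul, add_sub_add_comm, map_add, map_add, lie_add, hM, hN]
  | h_std_basis k l c =>
    rw [← mul_one c, ← smul_eq_mul c, ← Matrix.smul_single, Matrix.mul_smul, Matrix.smul_mul,
      ← smul_sub, map_smul, map_smul, lie_smul, hX.lie_matrixLift_single third k l hij, map_sub]
    congr 2 <;> split_ifs with h <;> simp [h, Matrix.single_mul_single_of_ne]

end IsSteinbergFamily

end SteinbergLieRelations

section PolynomialCurves

open Polynomial

variable {κ : Type*}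

/-- A curve of matrices whose entries are polynomial functions of the parameter. -/
def IsPolynomialCurve (f : ℂ → Matrix κ κ ℂ) : Prop :=
  ∃ P : Matrix κ κ ℂ[X], ∀ t, f t = P.map (evalRingHom t)

namespace IsPolynomialCurve

variable {f g : ℂ → Matrix κ κ ℂ}

lemma const (A : Matrix κ κ ℂ) : IsPolynomialCurve fun _ => A :=
  ⟨A.map C, fun t => by ext; simp⟩

lemma comp (hf : IsPolynomialCurve f) (q : ℂ[X]) : IsPolynomialCurve fun t => f (q.eval t) := by
  obtain ⟨P, hP⟩ := hf
  exact ⟨P.map fun p => p.comp q, fun t => by ext; simp [hP]⟩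

lemma comp_const_mul (hf : IsPolynomialCurve f) (c : ℂ) : IsPolynomialCurve fun t => f (c * t) := by
  have h := hf.comp (C c * X)
  simp only [eval_mul, eval_C, eval_X] at h
  exact h

lemma comp_const_add (hf : IsPolynomialCurve f) (c : ℂ) : IsPolynomialCurve fun t => f (c + t) := by
  have h := hf.comp (C c + X)
  simp only [eval_add, eval_C, eval_X] at h
  exact h

lemma eq_of_eq_mul_natCast (hf : IsPolynomialCurve f) (hg : IsPolynomialCurve g) {l : ℂ}
    (hl : l ≠ 0) (h : ∀ k : ℕ, f (l * k) = g (l * k)) (t : ℂ) : f t = g t := by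
  obtain ⟨P, hP⟩ := hf
  obtain ⟨Q, hQ⟩ := hg
  suffices P = Q by rw [hP, hQ, this]
  ext1 a b
  have hinj : Function.Injective fun k : ℕ => l * (k : ℂ) := fun a b hab => by simpa [hl] using hab
  refine eq_of_infinite_eval_eq _ _ ((Set.infinite_range_of_injective hinj).mono ?_)
  rintro _ ⟨k, rfl⟩
  simpa [hP, hQ] using congrFun₂ (h k) a b

lemma eq_of_eq_mul_natCast₂ {F G : ℂ → ℂ → Matrix κ κ ℂ}
    (hF₁ : ∀ t, IsPolynomialCurve fun s => F s t) (hF₂ : ∀ s, IsPolynomialCurve (F s))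
    (hG₁ : ∀ t, IsPolynomialCurve fun s => G s t) (hG₂ : ∀ s, IsPolynomialCurve (G s)) {l : ℂ}
    (hl : l ≠ 0) (h : ∀ a b : ℕ, F (l * a) (l * b) = G (l * a) (l * b)) (s t : ℂ) :
    F s t = G s t :=
  (hF₂ s).eq_of_eq_mul_natCast (hG₂ s) hl
    (fun b => (hF₁ _).eq_of_eq_mul_natCast (hG₁ _) hl (fun a => h a b) s) t

open scoped Matrix.Norms.Operator in
lemma differentiable [Finite κ] (hf : IsPolynomialCurve f) : Differentiable ℂ f := by
  classical
  have := Fintype.ofFinite κ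
  obtain ⟨P, hP⟩ := hf
  have hsum : f = fun t => ∑ a, ∑ b, (P a b).eval t • Matrix.single a b (1 : ℂ) := by
    funext t
    rw [hP, Matrix.matrix_eq_sum_single (P.map _)]
    simp [Matrix.smul_single]
  rw [hsum]
  fun_prop

variable [Fintype κ]

lemma mul (hf : IsPolynomialCurve f) (hg : IsPolynomialCurve g) :
    IsPolynomialCurve fun t => f t * g t := by
  obtain ⟨P, hP⟩ := hf
  obtain ⟨Q, hQ⟩ := hg
  exact ⟨P * Q, fun t => by simp only [hP, hQ, Matrix.map_mul]⟩

end IsPolynomialCurve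

lemma pow_eq_sum_choose_nsmul {R : Type*} [Ring R] {u : R} {M : ℕ} (hu : (u - 1) ^ M = 0)
    (k : ℕ) : u ^ k = ∑ m ∈ Finset.range M, k.choose m • (u - 1) ^ m := by
  have hextend : ∀ n, (∀ m, n ≤ m → k.choose m • (u - 1) ^ m = 0) → n ≤ M + (k + 1) →
      ∑ m ∈ Finset.range n, k.choose m • (u - 1) ^ m =
        ∑ m ∈ Finset.range (M + (k + 1)), k.choose m • (u - 1) ^ m := fun n hn hle =>
    Finset.sum_subset (Finset.range_mono hle) fun m _ hm => hn m (by simpa using hm)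
  rw [hextend M (fun m hm => by rw [pow_eq_zero_of_le hm hu, smul_zero]) (by lia),
    ← hextend (k + 1) (fun m hm => by rw [Nat.choose_eq_zero_of_lt hm, zero_smul]) (by lia)]
  conv_lhs => rw [← sub_add_cancel u 1, (Commute.one_right (u - 1)).add_pow]
  simp only [one_pow, mul_one, nsmul_eq_mul']

/-- The interpolation is `(1 + (u - 1)) ^ (t / l)`, a finite binomial series. -/
lemma exists_isPolynomialCurve_eq_pow [Fintype κ] [DecidableEq κ] {u : Matrix κ κ ℂ}
    (hu : IsNilpotent (u - 1)) {l : ℂ} (hl : l ≠ 0) :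
    ∃ f, IsPolynomialCurve f ∧ ∀ k : ℕ, f (l * k) = u ^ k := by
  obtain ⟨M, hM⟩ := hu
  let binom (m : ℕ) : ℂ[X] := C (m.factorial : ℂ)⁻¹ * (descPochhammer ℂ m).comp (C l⁻¹ * X)
  refine ⟨fun t => ∑ m ∈ Finset.range M, (binom m).eval t • (u - 1) ^ m,
    ⟨∑ m ∈ Finset.range M, binom m • ((u - 1) ^ m).map C, fun t => ?_⟩, fun k => ?_⟩
  · ext
    simp [Matrix.sum_apply, eval_finsetSum]
  · rw [pow_eq_sum_choose_nsmul hM]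
    refine Finset.sum_congr rfl fun m _ => ?_
    rw [← Nat.cast_smul_eq_nsmul ℂ]
    congr 1
    have hm : (m.factorial : ℂ) ≠ 0 := Nat.cast_ne_zero.mpr m.factorial_ne_zero
    simp only [binom, eval_mul, eval_C, eval_comp, eval_X]
    rw [inv_mul_cancel_left₀ hl, descPochhammer_eval_eq_descFactorial,
      Nat.descFactorial_eq_factorial_mul_choose, Nat.cast_mul, inv_mul_cancel_left₀ hm]

end PolynomialCurves

section SteinbergFlows

variable {ι κ : Type*} [Fintype κ] [DecidableEq κ]

/-- A family of polynomial one-parameter subgroups of `GL κ ℂ` satisfying the Steinberg relations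
between the transvections `e_ij(t)`, `i ≠ j`. The diagonal members are irrelevant. -/
structure IsSteinbergFlow (x : ι → ι → ℂ → Matrix κ κ ℂ) : Prop where
  isPolynomialCurve : ∀ ⦃i j⦄, i ≠ j → IsPolynomialCurve (x i j)
  map_zero : ∀ ⦃i j⦄, i ≠ j → x i j 0 = 1
  map_add : ∀ ⦃i j⦄, i ≠ j → ∀ s t, x i j (s + t) = x i j s * x i j t
  commute : ∀ ⦃i j k l⦄, i ≠ j → k ≠ l → i ≠ l → j ≠ k → ∀ s t, Commute (x i j s) (x k l t)
  mul_eq : ∀ ⦃i j k⦄, i ≠ j → j ≠ k → i ≠ k → ∀ s t,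
    x i j s * x j k t = x i k (s * t) * x j k t * x i j s

lemma isSteinbergFlow_of_eq_transvection [Fintype ι] [DecidableEq ι]
    (ρ : SpecialLinearGroup ι ℤ →* GL κ ℂ) {l : ℕ} (hl : l ≠ 0) {x : ι → ι → ℂ → Matrix κ κ ℂ}
    (hx : ∀ ⦃i j⦄, i ≠ j → IsPolynomialCurve (x i j))
    (hρ : ∀ i j (hij : i ≠ j) (k : ℕ), x i j (l * k) = (ρ (𝐞 hij (l * k : ℤ))).1) :
    IsSteinbergFlow x where
  isPolynomialCurve := hx
  map_zero i j hij := by simpa using hρ i j hij 0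
  map_add i j hij := by
    refine IsPolynomialCurve.eq_of_eq_mul_natCast₂
      (fun t => by simpa only [add_comm t] using (hx hij).comp_const_add t)
      (fun s => (hx hij).comp_const_add s) (fun t => (hx hij).mul (.const _))
      (fun s => (IsPolynomialCurve.const _).mul (hx hij)) (Nat.cast_ne_zero.mpr hl) fun a b => ?_
    have h := hρ i j hij (a + b)
    rw [Nat.cast_add, Nat.cast_add, mul_add, mul_add] at h
    rw [h, hρ, hρ, ← Units.val_mul, ← _root_.map_mul, transvection_add]
  commute i j k m hij hkm him hjk := by
    refine IsPolynomialCurve.eq_of_eq_mul_natCast₂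
      (fun t => (hx hij).mul (.const _)) (fun s => (IsPolynomialCurve.const _).mul (hx hkm))
      (fun t => (IsPolynomialCurve.const _).mul (hx hij)) (fun s => (hx hkm).mul (.const _))
      (Nat.cast_ne_zero.mpr hl) fun a b => ?_
    rw [hρ i j hij, hρ k m hkm, ← Units.val_mul, ← Units.val_mul, ← _root_.map_mul,
      ← _root_.map_mul, (commute_transvection hij hkm him hjk _ _).eq]
  mul_eq i j k hij hjk hik := by
    refine IsPolynomialCurve.eq_of_eq_mul_natCast₂
      (fun t => (hx hij).mul (.const _)) (fun s => (IsPolynomialCurve.const _).mul (hx hjk))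
      (fun t => (IsPolynomialCurve.mul (by simpa only [mul_comm t] using (hx hik).comp_const_mul t)
        (.const _)).mul (hx hij))
      (fun s => (((hx hik).comp_const_mul s).mul (hx hjk)).mul (.const _))
      (Nat.cast_ne_zero.mpr hl) fun a b => ?_
    have h := hρ i k hik (a * (l * b))
    push_cast at h
    rw [← mul_assoc] at h
    rw [h, hρ i j hij, hρ j k hjk, ← Units.val_mul, ← Units.val_mul, ← Units.val_mul,
      ← _root_.map_mul, ← _root_.map_mul, ← _root_.map_mul,
      transvection_mul_transvection hij hjk hik, mul_assoc (l : ℤ) a]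

theorem exists_isSteinbergFlow [Fintype ι] [DecidableEq ι]
    (ρ : SpecialLinearGroup ι ℤ →* GL κ ℂ) {l : ℕ} (hl : l ≠ 0)
    (hu : ∀ i j (hij : i ≠ j), IsNilpotent ((ρ (𝐞 hij (l : ℤ))).1 - 1)) :
    ∃ x, IsSteinbergFlow x ∧ ∀ i j (hij : i ≠ j), x i j l = (ρ (𝐞 hij (l : ℤ))).1 := by
  have hcurve (i j : ι) : ∃ f : ℂ → Matrix κ κ ℂ, ∀ hij : i ≠ j, IsPolynomialCurve f ∧
      ∀ k : ℕ, f (l * k) = (ρ (𝐞 hij (l * k : ℤ))).1 := by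
    by_cases hij : i = j
    · exact ⟨0, fun h => absurd hij h⟩
    obtain ⟨f, hf, hfρ⟩ := exists_isPolynomialCurve_eq_pow (hu i j hij) (Nat.cast_ne_zero.mpr hl)
    refine ⟨f, fun _ => ⟨hf, fun k => ?_⟩⟩
    rw [hfρ, mul_comm (l : ℤ), ← transvection_pow, map_pow, Units.val_pow_eq_pow_val]
  choose x hx using hcurve
  refine ⟨x, isSteinbergFlow_of_eq_transvection ρ hl (fun i j hij => (hx i j hij).1)
    fun i j hij => (hx i j hij).2, fun i j hij => ?_⟩
  simpa using (hx i j hij).2 1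

end SteinbergFlows

section FlowDerivatives

open scoped Matrix.Norms.Operator

attribute [local instance] LieRing.ofAssociativeRing LieAlgebra.ofAssociativeAlgebra

lemma commute_of_hasDerivAt {𝔸 : Type*} [NormedRing 𝔸] [NormedAlgebra ℂ 𝔸] {f : ℂ → 𝔸} {f' a : 𝔸}
    {s : ℂ} (hf : HasDerivAt f f' s) (h : ∀ t, Commute (f t) a) : Commute f' a :=
  (hf.mul_const a).unique (by simpa only [(h _).eq] using hf.const_mul a)

variable {ι κ : Type*} [Fintype κ] [DecidableEq κ] {x : ι → ι → ℂ → Matrix κ κ ℂ} {i j k l : ι}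

/-- The infinitesimal generators of the one-parameter subgroups `x i j`. -/
noncomputable def generator (x : ι → ι → ℂ → Matrix κ κ ℂ) (i j : ι) : Matrix κ κ ℂ :=
  deriv (x i j) 0

namespace IsSteinbergFlow

lemma mul_neg_self (hx : IsSteinbergFlow x) (hij : i ≠ j) (t : ℂ) :
    x i j t * x i j (-t) = 1 := by
  rw [← hx.map_add hij, add_neg_cancel, hx.map_zero hij]

lemma neg_mul_self (hx : IsSteinbergFlow x) (hij : i ≠ j) (t : ℂ) :
    x i j (-t) * x i j t = 1 := by
  rw [← hx.map_add hij, neg_add_cancel, hx.map_zero hij]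

lemma hasDerivAt_zero (hx : IsSteinbergFlow x) (hij : i ≠ j) :
    HasDerivAt (x i j) (generator x i j) 0 :=
  ((hx.isPolynomialCurve hij).differentiable 0).hasDerivAt

lemma hasDerivAt (hx : IsSteinbergFlow x) (hij : i ≠ j) (t : ℂ) :
    HasDerivAt (x i j) (generator x i j * x i j t) t := by
  have h : HasDerivAt (fun s => x i j (s - t)) (generator x i j) t :=
    HasDerivAt.comp_sub_const t t (by rw [sub_self]; exact hx.hasDerivAt_zero hij)
  refine (h.mul_const (x i j t)).congr_of_eventuallyEq (.of_forall fun s => ?_)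
  simp only [← hx.map_add hij, sub_add_cancel]

lemma commute_generator (hx : IsSteinbergFlow x) (hij : i ≠ j) (hkl : k ≠ l) (hil : i ≠ l)
    (hjk : j ≠ k) (t : ℂ) : Commute (generator x i j) (x k l t) :=
  commute_of_hasDerivAt (hx.hasDerivAt_zero hij) fun s => hx.commute hij hkl hil hjk s t

lemma generator_mul_eq (hx : IsSteinbergFlow x) (hij : i ≠ j) (hjk : j ≠ k) (hik : i ≠ k) (t : ℂ) :
    generator x i j * x j k t = t • (generator x i k * x j k t) + x j k t * generator x i j := by
  have hik' : HasDerivAt (fun s => x i k (s * t)) (t • generator x i k) 0 :=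
    HasDerivAt.scomp (h := fun s => s * t) 0 (by rw [zero_mul]; exact hx.hasDerivAt_zero hik)
      (hasDerivAt_mul_const t)
  have hrhs := (hik'.mul_const (x j k t)).fun_mul (hx.hasDerivAt_zero hij)
  refine ((hx.hasDerivAt_zero hij).mul_const (x j k t)).unique ?_
  simpa [hx.mul_eq hij hjk hik, hx.map_zero hij, hx.map_zero hik] using hrhs

theorem isSteinbergFamily_generator (hx : IsSteinbergFlow x) :
    IsSteinbergFamily (generator x) where
  lie_eq i j k hij hjk hik := by
    have hjk' := hx.hasDerivAt_zero hjk
    have hrhs := ((hasDerivAt_id' (0 : ℂ)).fun_smul (hjk'.const_mul (generator x i k))).fun_add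
      (hjk'.mul_const (generator x i j))
    have h := (hjk'.const_mul (generator x i j)).unique
      (by simpa only [hx.generator_mul_eq hij hjk hik] using hrhs)
    rw [Ring.lie_def, h]
    simp [hx.map_zero hjk]
  lie_eq_zero i j k l hij hkl hil hjk := by
    refine sub_eq_zero.mpr (commute_of_hasDerivAt (hx.hasDerivAt_zero hkl) fun t => ?_).symm
    exact (hx.commute_generator hij hkl hil hjk t).symm

end IsSteinbergFlow

variable [DecidableEq ι]

lemma hasDerivAt_transvection [Finite ι] (i j : ι) (s : ℂ) :
    HasDerivAt (Matrix.transvection i j) (single i j (1 : ℂ)) s := by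
  have := Fintype.ofFinite ι
  have h := ((hasDerivAt_id' s).smul_const (single i j (1 : ℂ))).const_add 1
  simp only [Matrix.smul_single, smul_eq_mul, mul_one] at h
  exact h

variable [Fintype ι]

/-- The map on Lie algebras induced by a Steinberg flow, extended to all matrices. -/
noncomputable def tangentMap (x : ι → ι → ℂ → Matrix κ κ ℂ) : Matrix ι ι ℂ →ₗ[ℂ] Matrix κ κ ℂ :=
  matrixLift ℂ (generator x)

lemma tangentMap_single (x : ι → ι → ℂ → Matrix κ κ ℂ) (hij : i ≠ j) :
    tangentMap x (single i j 1) = generator x i j := matrixLift_single_of_ne _ hij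

lemma single_mul_transvection (hij : i ≠ j) (s : ℂ) :
    single i j 1 * Matrix.transvection i j s = single i j 1 := by
  rw [Matrix.transvection, mul_add, mul_one, single_mul_single_of_ne _ _ _ _ hij.symm, add_zero]

lemma transvection_mul_single (hij : i ≠ j) (s : ℂ) :
    Matrix.transvection i j s * single i j 1 = single i j 1 := by
  rw [Matrix.transvection, add_mul, one_mul, single_mul_single_of_ne _ _ _ _ hij.symm, add_zero]

lemma hasDerivAt_transvection_conj (hij : i ≠ j) (M : Matrix ι ι ℂ) (s : ℂ) :
    HasDerivAt (fun t => Matrix.transvection i j t * M * Matrix.transvection i j (-t))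
      (single i j 1 * (Matrix.transvection i j s * M * Matrix.transvection i j (-s)) -
        Matrix.transvection i j s * M * Matrix.transvection i j (-s) * single i j 1) s := by
  have hneg : HasDerivAt (fun t => Matrix.transvection i j (-t)) _ s :=
    HasDerivAt.scomp (h := Neg.neg) s (hasDerivAt_transvection i j (-s)) (hasDerivAt_neg s)
  refine (((hasDerivAt_transvection i j s).mul_const M).fun_mul hneg).congr_deriv ?_
  rw [mul_assoc _ (Matrix.transvection i j (-s)), transvection_mul_single hij, ← mul_assoc,
    ← mul_assoc, single_mul_transvection hij, neg_one_smul, mul_neg, sub_eq_add_neg]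

namespace IsSteinbergFlow

/-- The curve `x_ij(-s) θ(e_ij(s) M e_ij(-s)) x_ij(s)` has derivative zero. -/
theorem mul_tangentMap (hx : IsSteinbergFlow x) (third : ∀ a b : ι, ∃ c, c ≠ a ∧ c ≠ b)
    (hij : i ≠ j) (s : ℂ) (M : Matrix ι ι ℂ) : x i j s * tangentMap x M =
      tangentMap x (Matrix.transvection i j s * M * Matrix.transvection i j (-s)) * x i j s := by
  set N : ℂ → Matrix ι ι ℂ := fun t => Matrix.transvection i j t * M * Matrix.transvection i j (-t)
  have hN (t : ℂ) : HasDerivAt (fun t => tangentMap x (N t))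
      ⁅generator x i j, tangentMap x (N t)⁆ t := by
    rw [tangentMap, ← hx.isSteinbergFamily_generator.matrixLift_mul_sub_mul third hij]
    exact (LinearMap.toContinuousLinearMap (tangentMap x)).hasFDerivAt.comp_hasDerivAt t
      (hasDerivAt_transvection_conj hij M t)
  have hconst (t : ℂ) : HasDerivAt (fun t => x i j (-t) * tangentMap x (N t) * x i j t) 0 t := by
    have hneg : HasDerivAt (fun t => x i j (-t)) _ t :=
      HasDerivAt.scomp t (hx.hasDerivAt hij (-t)) (hasDerivAt_neg t)
    refine ((hneg.fun_mul (hN t)).fun_mul (hx.hasDerivAt hij t)).congr_deriv ?_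
    have hcomm : Commute (generator x i j) (x i j (-t)) :=
      hx.commute_generator hij hij hij hij.symm (-t)
    simp only [hcomm.eq, Ring.lie_def, neg_one_smul, neg_mul, mul_sub, sub_mul, add_mul, mul_assoc]
    abel
  have h := is_const_of_deriv_eq_zero (fun t => (hconst t).differentiableAt)
    (fun t => (hconst t).deriv) s 0
  simp only [N, neg_zero, hx.map_zero hij, Matrix.transvection_zero, one_mul, mul_one] at h
  rw [← h, ← mul_assoc, ← mul_assoc, hx.mul_neg_self hij, one_mul]

end IsSteinbergFlow

end FlowDerivatives

section TransvectionWords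

variable {ι R S : Type*}

/-- Formal words in symbols `e_ij(c)`, `i ≠ j`, with coefficients `c` in `R`. -/
abbrev TransvectionWord (ι R : Type*) := FreeGroup ({p : ι × ι // p.1 ≠ p.2} × R)

namespace TransvectionWord

/-- Apply a function to all coefficients of a word. -/
def mapCoeff (f : R → S) : TransvectionWord ι R →* TransvectionWord ι S :=
  FreeGroup.map (Prod.map id f)

@[simp]
lemma mapCoeff_of (f : R → S) (q : {p : ι × ι // p.1 ≠ p.2} × R) :
    mapCoeff f (FreeGroup.of q) = FreeGroup.of (q.1, f q.2) := rfl

lemma mapCoeff_mapCoeff {T : Type*} (g : S → T) (f : R → S) (w : TransvectionWord ι R) :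
    mapCoeff g (mapCoeff f w) = mapCoeff (fun c => g (f c)) w := by
  simp only [mapCoeff, FreeGroup.map.comp]
  rfl

lemma mapCoeff_id (w : TransvectionWord ι R) : mapCoeff (fun c => c) w = w :=
  FreeGroup.map.id w

variable [DecidableEq ι] [Fintype ι] [CommRing R] [CommRing S]

/-- The matrix represented by a word. -/
def toSL : TransvectionWord ι R →* SpecialLinearGroup ι R :=
  FreeGroup.lift fun q => 𝐞 q.1.2 q.2

@[simp]
lemma toSL_of (p : {p : ι × ι // p.1 ≠ p.2}) (c : R) :
    toSL (FreeGroup.of (p, c)) = 𝐞 p.2 c := FreeGroup.lift_apply_of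

lemma toSL_mapCoeff (f : R →+* S) (w : TransvectionWord ι R) :
    toSL (mapCoeff f w) = SpecialLinearGroup.map f (toSL w) := by
  have h : toSL.comp (mapCoeff f) = (SpecialLinearGroup.map f).comp (toSL (ι := ι)) := by
    ext1 ⟨p, c⟩
    simp [map_transvection]
  exact DFunLike.congr_fun h w

omit [CommRing S] in
lemma toSL_mapCoeff_const_zero (w : TransvectionWord ι S) :
    toSL (mapCoeff (fun _ => (0 : R)) w) = 1 := by
  have h : toSL.comp (mapCoeff fun _ : S => (0 : R)) = (1 : TransvectionWord ι S →* _) := by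
    ext1 ⟨p, c⟩
    simp
  exact DFunLike.congr_fun h w

/-- The matrix represented by a word, as an element of the matrix ring. -/
def toMatrix : TransvectionWord ι R →* Matrix ι ι R := coeMonoidHom.comp toSL

lemma toMatrix_of (p : {p : ι × ι // p.1 ≠ p.2}) (c : R) :
    toMatrix (FreeGroup.of (p, c)) = Matrix.transvection p.1.1 p.1.2 c := by
  rw [toMatrix, MonoidHom.comp_apply, toSL_of]
  rfl

lemma toMatrix_of_inv (p : {p : ι × ι // p.1 ≠ p.2}) (c : R) :
    toMatrix (FreeGroup.of (p, c))⁻¹ = Matrix.transvection p.1.1 p.1.2 (-c) := by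
  rw [toMatrix, MonoidHom.comp_apply, map_inv, toSL_of, transvection_inv]
  rfl

lemma toMatrix_mapCoeff (f : R →+* S) (w : TransvectionWord ι R) :
    toMatrix (mapCoeff f w) = f.mapMatrix (toMatrix w) := by
  rw [toMatrix, MonoidHom.comp_apply, toSL_mapCoeff]
  rfl

end TransvectionWord

open TransvectionWord

variable {κ : Type*} [Fintype κ] [DecidableEq κ] {x : ι → ι → ℂ → Matrix κ κ ℂ}

namespace IsSteinbergFlow

/-- The value of a word under `e_ij(c) ↦ x i j c`. -/
def wordHom (hx : IsSteinbergFlow x) : TransvectionWord ι ℂ →* GL κ ℂ :=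
  FreeGroup.lift fun q => ⟨x q.1.1.1 q.1.1.2 q.2, x q.1.1.1 q.1.1.2 (-q.2),
    hx.mul_neg_self q.1.2 q.2, hx.neg_mul_self q.1.2 q.2⟩

lemma coe_wordHom_of (hx : IsSteinbergFlow x) (p : {p : ι × ι // p.1 ≠ p.2}) (c : ℂ) :
    (hx.wordHom (FreeGroup.of (p, c))).1 = x p.1.1 p.1.2 c := by
  rw [wordHom, FreeGroup.lift_apply_of]

lemma coe_wordHom_of_inv (hx : IsSteinbergFlow x) (p : {p : ι × ι // p.1 ≠ p.2}) (c : ℂ) :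
    (hx.wordHom (FreeGroup.of (p, c))⁻¹).1 = x p.1.1 p.1.2 (-c) := by
  rw [map_inv, wordHom, FreeGroup.lift_apply_of]
  rfl

lemma wordHom_mapCoeff_const_zero (hx : IsSteinbergFlow x) (w : TransvectionWord ι S) :
    hx.wordHom (mapCoeff (fun _ => (0 : ℂ)) w) = 1 := by
  have h : hx.wordHom.comp (mapCoeff fun _ : S => (0 : ℂ)) = 1 := by
    ext1 ⟨p, c⟩
    ext1
    exact (hx.coe_wordHom_of p 0).trans (hx.map_zero p.2)
  exact DFunLike.congr_fun h w

variable [DecidableEq ι] [Fintype ι]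

lemma wordHom_mul_tangentMap (hx : IsSteinbergFlow x) (third : ∀ a b : ι, ∃ c, c ≠ a ∧ c ≠ b)
    (w : TransvectionWord ι ℂ) (M : Matrix ι ι ℂ) : (hx.wordHom w).1 * tangentMap x M =
      tangentMap x (toMatrix w * M * toMatrix w⁻¹) * (hx.wordHom w).1 := by
  induction w using FreeGroup.induction_on generalizing M with
  | C1 => simp
  | of q =>
    rw [coe_wordHom_of, toMatrix_of, toMatrix_of_inv]
    exact hx.mul_tangentMap third q.1.2 q.2 M
  | inv_of q =>
    rw [coe_wordHom_of_inv, inv_inv, toMatrix_of, toMatrix_of_inv]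
    simpa only [neg_neg] using hx.mul_tangentMap third q.1.2 (-q.2) M
  | mul v w hv hw =>
    simp only [_root_.map_mul, Units.val_mul, mul_assoc, hw, _root_.mul_inv_rev]
    simp only [← mul_assoc, hv]

open scoped Matrix.Norms.Operator

theorem exists_hasDerivAt_word (hx : IsSteinbergFlow x) (third : ∀ a b : ι, ∃ c, c ≠ a ∧ c ≠ b)
    (r : S → ℂ → ℂ) (s : ℂ) (hr : ∀ c, DifferentiableAt ℂ (r c) s) (w : TransvectionWord ι S) :
    ∃ D : Matrix ι ι ℂ,
      HasDerivAt (fun t => toMatrix (mapCoeff (r · t) w)) (D * toMatrix (mapCoeff (r · s) w)) s ∧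
      HasDerivAt (fun t => (hx.wordHom (mapCoeff (r · t) w)).1)
        (tangentMap x D * (hx.wordHom (mapCoeff (r · s) w)).1) s := by
  have hcurve {i j : ι} (hij : i ≠ j) {f : ℂ → ℂ} (hf : DifferentiableAt ℂ f s) :
      HasDerivAt (fun t => Matrix.transvection i j (f t))
        (deriv f s • single i j 1 * Matrix.transvection i j (f s)) s ∧
      HasDerivAt (fun t => x i j (f t))
        (tangentMap x (deriv f s • single i j 1) * x i j (f s)) s := by
    rw [smul_mul_assoc, single_mul_transvection hij, map_smul, smul_mul_assoc,
      tangentMap_single x hij]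
    exact ⟨HasDerivAt.scomp (h := f) s (hasDerivAt_transvection i j (f s)) hf.hasDerivAt,
      HasDerivAt.scomp (h := f) s (hx.hasDerivAt hij (f s)) hf.hasDerivAt⟩
  induction w using FreeGroup.induction_on with
  | C1 =>
    simp only [map_one, Units.val_one]
    exact ⟨0, (hasDerivAt_const s _).congr_deriv (zero_mul _).symm,
      (hasDerivAt_const s _).congr_deriv (by rw [_root_.map_zero, zero_mul])⟩
  | of q =>
    simp only [mapCoeff_of, coe_wordHom_of, toMatrix_of]
    exact ⟨_, hcurve q.1.2 (hr q.2)⟩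
  | inv_of q =>
    simp only [map_inv (mapCoeff _), mapCoeff_of, coe_wordHom_of_inv, toMatrix_of_inv]
    exact ⟨_, hcurve q.1.2 (hr q.2).fun_neg⟩
  | mul v w hv hw =>
    obtain ⟨D, hDE, hDX⟩ := hv
    obtain ⟨D', hDE', hDX'⟩ := hw
    let v' := mapCoeff (r · s) v
    have hinv : toMatrix v'⁻¹ * toMatrix v' = 1 := by
      rw [← _root_.map_mul, inv_mul_cancel, _root_.map_one]
    refine ⟨D + toMatrix v' * D' * toMatrix v'⁻¹, ?_, ?_⟩
    · simp only [_root_.map_mul]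
      refine (hDE.fun_mul hDE').congr_deriv ?_
      rw [add_mul, mul_assoc (_ * D'), ← mul_assoc (toMatrix v'⁻¹), hinv, one_mul, mul_assoc,
        mul_assoc]
    · simp only [_root_.map_mul, Units.val_mul]
      refine (hDX.fun_mul hDX').congr_deriv ?_
      rw [_root_.map_add, add_mul, ← mul_assoc (tangentMap x (_ * _ * _)),
        ← hx.wordHom_mul_tangentMap third, mul_assoc, mul_assoc]

theorem wordHom_eq_of_toMatrix_eq_one (hx : IsSteinbergFlow x)
    (third : ∀ a b : ι, ∃ c, c ≠ a ∧ c ≠ b) {U : Set ℂ} (hU : IsOpen U) (hUc : IsPreconnected U)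
    (r : S → ℂ → ℂ) (hr : ∀ c, DifferentiableOn ℂ (r c) U) (w : TransvectionWord ι S)
    (hw : ∀ s ∈ U, toMatrix (mapCoeff (r · s) w) = 1) {s t : ℂ} (hs : s ∈ U) (ht : t ∈ U) :
    hx.wordHom (mapCoeff (r · s) w) = hx.wordHom (mapCoeff (r · t) w) := by
  have hderiv (s : ℂ) (hs : s ∈ U) :
      HasDerivAt (fun t => (hx.wordHom (mapCoeff (r · t) w)).1) 0 s := by
    obtain ⟨D, hDE, hDX⟩ := hx.exists_hasDerivAt_word third r s
      (fun c => (hr c).differentiableAt (hU.mem_nhds hs)) w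
    have hone : (fun t => toMatrix (mapCoeff (r · t) w)) =ᶠ[nhds s] fun _ => 1 := by
      filter_upwards [hU.mem_nhds hs] with t ht
      exact hw t ht
    have hD := hDE.unique ((hasDerivAt_const s 1).congr_of_eventuallyEq hone)
    rw [hw s hs, mul_one] at hD
    simpa only [hD, _root_.map_zero, zero_mul] using hDX
  exact Units.ext (hU.is_const_of_deriv_eq_zero hUc
    (fun s hs => (hderiv s hs).differentiableAt.differentiableWithinAt)
    (fun s hs => (hderiv s hs).deriv) hs ht)

end IsSteinbergFlow

end TransvectionWords

noncomputable section RationalSection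

open MvPolynomial TransvectionWord

variable {ι R K F : Type*} [DecidableEq ι] [Fintype ι] [CommRing R] [Field K] [Field F]

lemma exists_toSL_mapCoeff_div [IsDomain R] [Nontrivial ι] [Algebra R K] [IsFractionRing R K]
    (M : SpecialLinearGroup ι K) : ∃ d : R, d ≠ 0 ∧ ∃ w : TransvectionWord ι R,
      toSL (mapCoeff (fun c => algebraMap R K c / algebraMap R K d) w) = M := by
  refine transvection_induction (fun M => ∃ d : R, d ≠ 0 ∧ ∃ w : TransvectionWord ι R,
    toSL (mapCoeff (fun c => algebraMap R K c / algebraMap R K d) w) = M) ?_ ?_ M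
  · intro i j hij c
    obtain ⟨a, b, hb, rfl⟩ := IsFractionRing.div_surjective (A := R) c
    exact ⟨b, nonZeroDivisors.ne_zero hb, FreeGroup.of (⟨(i, j), hij⟩, a), toSL_of _ _⟩
  · rintro _ _ ⟨d, hd, v, rfl⟩ ⟨e, he, w, rfl⟩
    have hdK := (IsFractionRing.to_map_eq_zero_iff (K := K)).not.2 hd
    have heK := (IsFractionRing.to_map_eq_zero_iff (K := K)).not.2 he
    refine ⟨d * e, mul_ne_zero hd he, mapCoeff (· * e) v * mapCoeff (d * ·) w, ?_⟩
    simp only [_root_.map_mul, mapCoeff_mapCoeff, mul_div_mul_left _ _ hdK,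
      mul_div_mul_right _ _ heK]

lemma mapMatrix_toMatrix_mapCoeff_mul {A : Type*} [CommRing A] (φ : A →+* F) (a : R →+* A) {d : R}
    {u : A} (hu : a d * u = 1) (w : TransvectionWord ι R) :
    φ.mapMatrix (toMatrix (mapCoeff (fun c => a c * u) w)) =
      toMatrix (mapCoeff (fun c => φ (a c) / φ (a d)) w) := by
  have hφu : φ u = (φ (a d))⁻¹ :=
    eq_inv_of_mul_eq_one_right (by rw [← _root_.map_mul, hu, _root_.map_one])
  simp only [div_eq_mul_inv, ← hφu, ← _root_.map_mul]
  rw [← mapCoeff_mapCoeff, toMatrix_mapCoeff]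

/-- Both `f` and `g` factor through the localization away from `d`. -/
lemma toMatrix_mapCoeff_div_mul_eq {f : R →+* K} (hf : Function.Injective f) (g : R →+* F) {d : R}
    (hd : g d ≠ 0) {w : TransvectionWord ι R} {B C : Matrix ι ι R}
    (h : toMatrix (mapCoeff (fun c => f c / f d) w) * f.mapMatrix B = f.mapMatrix C) :
    toMatrix (mapCoeff (fun c => g c / g d) w) * g.mapMatrix B = g.mapMatrix C := by
  let A := Localization.Away d
  let a : R →+* A := algebraMap R A
  have hfd : f d ≠ 0 := (map_ne_zero_iff f hf).2 fun h0 => hd (by rw [h0, _root_.map_zero])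
  let φf : A →+* K := IsLocalization.Away.lift (g := f) d hfd.isUnit
  let φg : A →+* F := IsLocalization.Away.lift (g := g) d hd.isUnit
  have hφf : φf.comp a = f := IsLocalization.Away.lift_comp d hfd.isUnit
  have hφg : φg.comp a = g := IsLocalization.Away.lift_comp d hd.isUnit
  have ha : a d * IsLocalization.Away.invSelf d = 1 := IsLocalization.Away.mul_invSelf d
  have hinj : Function.Injective φf := by
    refine (IsLocalization.lift_injective_iff _).2 fun y z => ⟨fun hyz => ?_, fun hyz => ?_⟩
    · have := congrArg φf hyz
      rwa [← RingHom.comp_apply φf, ← RingHom.comp_apply φf, hφf] at this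
    · rw [hf hyz]
  have hA : toMatrix (mapCoeff (fun c => a c * IsLocalization.Away.invSelf d) w) * a.mapMatrix B =
      a.mapMatrix C := by
    apply Matrix.map_injective hinj
    change φf.mapMatrix _ = φf.mapMatrix _
    rw [_root_.map_mul, mapMatrix_toMatrix_mapCoeff_mul φf a ha]
    rw [← hφf] at h
    exact h
  have := congrArg φg.mapMatrix hA
  rw [_root_.map_mul, mapMatrix_toMatrix_mapCoeff_mul φg a ha] at this
  rw [← hφg]
  exact this

/-- The entries of a matrix, as values for the variables of a polynomial. -/
def evalAt (Y : Matrix ι ι ℂ) : MvPolynomial (ι × ι) ℂ →ₐ[ℂ] ℂ := aeval fun q => Y q.1 q.2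

lemma mapMatrix_evalAt_mvPolynomialX (Y : Matrix ι ι ℂ) :
    (evalAt Y : _ →+* ℂ).mapMatrix (mvPolynomialX ι ι ℂ) = Y := by
  ext i j
  simp [evalAt]

/-- The word `w` whose coefficients are evaluated at `Y` and divided by `d(Y)`. -/
def rationalWord (d : MvPolynomial (ι × ι) ℂ)
    (w : TransvectionWord ι (MvPolynomial (ι × ι) ℂ)) (Y : Matrix ι ι ℂ) : TransvectionWord ι ℂ :=
  mapCoeff (fun c => evalAt Y c / evalAt Y d) w

lemma det_diagonal_mulSingle (i : ι) (c : R) : (diagonal (Pi.mulSingle i c)).det = c := by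
  rw [det_diagonal, Finset.prod_pi_mulSingle', if_pos (Finset.mem_univ i)]

omit [Fintype ι] in
lemma map_diagonal_mulSingle {A : Type*} [CommRing A] (f : R →+* A) (i : ι) (c : R) :
    (diagonal (Pi.mulSingle i c)).map f = diagonal (Pi.mulSingle i (f c)) := by
  rw [diagonal_map (_root_.map_zero f)]
  congr 1
  funext j
  exact Pi.apply_mulSingle (fun _ => f) (fun _ => _root_.map_one f) i c j

/-- Specializes a factorization of the generic matrix, with one column divided by the determinant,
into transvections over the field of rational functions. -/
lemma exists_toMatrix_rationalWord_mul_diagonal [Nontrivial ι] (i₀ : ι) :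
    ∃ d : MvPolynomial (ι × ι) ℂ, d ≠ 0 ∧ ∃ w, ∀ Y : Matrix ι ι ℂ, evalAt Y d ≠ 0 →
      toMatrix (rationalWord d w Y) * diagonal (Pi.mulSingle i₀ Y.det) = Y := by
  let K := FractionRing (MvPolynomial (ι × ι) ℂ)
  let f : MvPolynomial (ι × ι) ℂ →+* K := algebraMap _ K
  let G := mvPolynomialX ι ι ℂ
  have hG : f G.det ≠ 0 :=
    (IsFractionRing.to_map_eq_zero_iff (K := K)).not.2 (det_mvPolynomialX_ne_zero ι ℂ)
  let M : SpecialLinearGroup ι K := ⟨f.mapMatrix G * diagonal (Pi.mulSingle i₀ (f G.det)⁻¹), by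
    rw [det_mul, det_diagonal_mulSingle, ← RingHom.map_det, mul_inv_cancel₀ hG]⟩
  obtain ⟨d, hd, w, hw⟩ := exists_toSL_mapCoeff_div (R := MvPolynomial (ι × ι) ℂ) M
  have hgeneric : toMatrix (mapCoeff (fun c => f c / f d) w) *
      f.mapMatrix (diagonal (Pi.mulSingle i₀ G.det)) = f.mapMatrix G := by
    have hM : toMatrix (mapCoeff (fun c => f c / f d) w) = M.1 := congrArg Subtype.val hw
    rw [hM, RingHom.mapMatrix_apply f (diagonal _), map_diagonal_mulSingle, mul_assoc,
      diagonal_mul_diagonal', ← Pi.mul_def, ← Pi.mulSingle_mul, inv_mul_cancel₀ hG,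
      Pi.mulSingle_one, Pi.one_def, diagonal_one, mul_one]
  refine ⟨d, hd, w, fun Y hY => ?_⟩
  have hYG := mapMatrix_evalAt_mvPolynomialX Y
  have := toMatrix_mapCoeff_div_mul_eq (IsFractionRing.injective _ K) (evalAt Y : _ →+* ℂ) hY
    hgeneric
  rwa [RingHom.mapMatrix_apply _ (diagonal _), map_diagonal_mulSingle, RingHom.map_det,
    hYG] at this

/-- The words `w(Y) = rationalWord d w Y` satisfy `w(gY) = g w(Y)` in the special linear group
wherever `d` does not vanish. -/
structure IsRationalSection (d : MvPolynomial (ι × ι) ℂ)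
    (w : TransvectionWord ι (MvPolynomial (ι × ι) ℂ)) : Prop where
  ne_zero : d ≠ 0
  toSL_rationalWord_mul (g : SpecialLinearGroup ι ℂ) (Y : Matrix ι ι ℂ) :
    evalAt Y d ≠ 0 → evalAt (g.1 * Y) d ≠ 0 →
      toSL (rationalWord d w (g.1 * Y)) = g * toSL (rationalWord d w Y)

variable (ι) in
theorem exists_isRationalSection [Nontrivial ι] :
    ∃ (d : MvPolynomial (ι × ι) ℂ) (w : _), IsRationalSection d w := by
  obtain ⟨i₀⟩ := (inferInstance : Nonempty ι)
  obtain ⟨d, hd, w, hw⟩ := exists_toMatrix_rationalWord_mul_diagonal i₀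
  let δ : MvPolynomial (ι × ι) ℂ := (mvPolynomialX ι ι ℂ).det
  have hδ (Y : Matrix ι ι ℂ) : evalAt Y δ = Y.det := by
    rw [← RingHom.coe_coe, RingHom.map_det, mapMatrix_evalAt_mvPolynomialX]
  refine ⟨d * δ, mapCoeff (· * δ) w, mul_ne_zero hd (det_mvPolynomialX_ne_zero ι ℂ),
    fun g Y hY hgY => ?_⟩
  rw [_root_.map_mul] at hY hgY
  have hword (Z : Matrix ι ι ℂ) (hZ : evalAt Z δ ≠ 0) :
      rationalWord (d * δ) (mapCoeff (· * δ) w) Z = rationalWord d w Z := by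
    simp only [rationalWord, mapCoeff_mapCoeff, _root_.map_mul, mul_div_mul_right _ _ hZ]
  rw [hword Y (right_ne_zero_of_mul hY), hword _ (right_ne_zero_of_mul hgY)]
  have hunit : IsUnit (diagonal (Pi.mulSingle i₀ Y.det)) := by
    rw [isUnit_iff_isUnit_det, det_diagonal_mulSingle, ← hδ]
    exact (right_ne_zero_of_mul hY).isUnit
  have hgdet : (g.1 * Y).det = Y.det := by rw [det_mul, g.det_coe, one_mul]
  apply coeMonoidHom_injective
  rw [_root_.map_mul]
  apply hunit.mul_right_cancel
  calc toMatrix (rationalWord d w (g.1 * Y)) * diagonal (Pi.mulSingle i₀ Y.det)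
      = g.1 * Y := by rw [← hgdet, hw _ (left_ne_zero_of_mul hgY)]
    _ = g.1 * toMatrix (rationalWord d w Y) * diagonal (Pi.mulSingle i₀ Y.det) := by
        rw [mul_assoc, hw Y (left_ne_zero_of_mul hY)]

end RationalSection

section Representation

open MvPolynomial TransvectionWord

variable {ι κ : Type*} [DecidableEq ι] [Fintype ι]

omit [DecidableEq ι] in
lemma exists_evalAt_mul_mul (A B : Matrix ι ι ℂ) (p : MvPolynomial (ι × ι) ℂ) :
    ∃ q : MvPolynomial (ι × ι) ℂ, ∀ Y, evalAt Y q = evalAt (A * Y * B) p := by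
  classical
  let T : Matrix ι ι (MvPolynomial (ι × ι) ℂ) := A.map C * mvPolynomialX ι ι ℂ * B.map C
  refine ⟨aeval (fun q => T q.1 q.2) p, fun Y => ?_⟩
  have hT : (evalAt Y : _ →+* ℂ).mapMatrix T = A * Y * B := by
    have hC (M : Matrix ι ι ℂ) :
        (evalAt Y : MvPolynomial (ι × ι) ℂ →+* ℂ).mapMatrix (M.map C) = M := by
      ext i j
      simp [evalAt]
    simp only [T, _root_.map_mul, hC, mapMatrix_evalAt_mvPolynomialX]
  rw [comp_aeval_apply, ← hT]
  rfl

lemma exists_evalAt_curve_eq_eval (w : TransvectionWord ι ℂ) (Y : Matrix ι ι ℂ)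
    (p : MvPolynomial (ι × ι) ℂ) :
    ∃ P : Polynomial ℂ, ∀ s, evalAt (toMatrix (mapCoeff (· * s) w) * Y) p = P.eval s := by
  let G := toMatrix (mapCoeff (fun c => Polynomial.C c * Polynomial.X) w) * Y.map Polynomial.C
  refine ⟨aeval (fun q => G q.1 q.2) p, fun s => ?_⟩
  have hG : (Polynomial.evalRingHom s).mapMatrix G = toMatrix (mapCoeff (· * s) w) * Y := by
    rw [_root_.map_mul, ← toMatrix_mapCoeff, mapCoeff_mapCoeff]
    congr 1
    · simp
    · ext i j
      simp
  rw [← hG, ← Polynomial.coe_aeval_eq_eval, comp_aeval_apply]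
  rfl

lemma exists_evalAt_ne_zero_and (g : SpecialLinearGroup ι ℂ) {p : MvPolynomial (ι × ι) ℂ}
    (hp : p ≠ 0) : ∃ Y : Matrix ι ι ℂ, evalAt Y p ≠ 0 ∧ evalAt (g.1 * Y) p ≠ 0 := by
  have exists_ne {q : MvPolynomial (ι × ι) ℂ} (hq : q ≠ 0) :
      ∃ Y : Matrix ι ι ℂ, evalAt Y q ≠ 0 := by
    by_contra! h
    exact hq (MvPolynomial.funext fun v => by simpa [evalAt] using h (of fun i j => v (i, j)))
  obtain ⟨q, hq⟩ := exists_evalAt_mul_mul g.1 1 p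
  simp only [mul_one] at hq
  have hq0 : q ≠ 0 := by
    rintro rfl
    obtain ⟨Y, hY⟩ := exists_ne hp
    refine hY ?_
    have hgY : g.1 * ((g⁻¹).1 * Y) = Y := by
      rw [← mul_assoc, ← coe_mul g, mul_inv_cancel]
      exact one_mul Y
    rw [← hgY, ← hq, _root_.map_zero]
  obtain ⟨Y, hY⟩ := exists_ne (mul_ne_zero hp hq0)
  rw [_root_.map_mul, hq] at hY
  exact ⟨Y, left_ne_zero_of_mul hY, right_ne_zero_of_mul hY⟩

lemma isPreconnected_setOf_eval_ne_zero {P : Polynomial ℂ} (hP : P ≠ 0) :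
    IsPreconnected {s | P.eval s ≠ 0} :=
  ((Polynomial.finite_setOfPred_isRoot hP).countable.isPathConnected_compl_of_one_lt_rank
    (by simp [Complex.rank_real_complex])).isConnected.isPreconnected

variable [DecidableEq κ] [Fintype κ] {x : ι → ι → ℂ → Matrix κ κ ℂ}
  {d : MvPolynomial (ι × ι) ℂ} {w : TransvectionWord ι (MvPolynomial (ι × ι) ℂ)}

namespace IsRationalSection

/-- Scaling the coefficients of `u` connects `u` to the empty word, and along this path the two
sides are the flows of the same curve of matrices. -/
theorem wordHom_rationalWord_mul (hw : IsRationalSection d w) (hx : IsSteinbergFlow x)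
    (third : ∀ a b : ι, ∃ c, c ≠ a ∧ c ≠ b) (u : TransvectionWord ι ℂ) {Y : Matrix ι ι ℂ}
    (hY : evalAt Y d ≠ 0) (huY : evalAt (toMatrix u * Y) d ≠ 0) :
    hx.wordHom (rationalWord d w (toMatrix u * Y)) =
      hx.wordHom u * hx.wordHom (rationalWord d w Y) := by
  let Z (s : ℂ) : Matrix ι ι ℂ := toMatrix (mapCoeff (· * s) u) * Y
  have hZ₀ : Z 0 = Y := by
    simp only [Z, mul_zero, toMatrix, MonoidHom.comp_apply, toSL_mapCoeff_const_zero,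
      _root_.map_one, one_mul]
  have hZ₁ : Z 1 = toMatrix u * Y := by simp only [Z, mul_one, mapCoeff_id]
  choose P hP using exists_evalAt_curve_eq_eval u Y
  let U : Set ℂ := {s | (P d).eval s ≠ 0}
  have hU (s : ℂ) : s ∈ U ↔ evalAt (Z s) d ≠ 0 := by rw [hP d s]; rfl
  have hU₀ : (0 : ℂ) ∈ U := by rwa [hU, hZ₀]
  have hPd : P d ≠ 0 := by
    intro h
    exact hU₀ (by rw [h, Polynomial.eval_zero])
  let S := {f : ℂ → ℂ // DifferentiableOn ℂ f U}
  let line (c : ℂ) : S := ⟨fun s => c * s, (differentiable_id.const_mul c).differentiableOn⟩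
  let const (c : ℂ) : S := ⟨fun _ => c, differentiableOn_const c⟩
  let ratio (c : MvPolynomial (ι × ι) ℂ) : S := ⟨fun s => evalAt (Z s) c / evalAt (Z s) d, by
    simp only [Z, hP]
    exact (P c).differentiable.differentiableOn.div (P d).differentiable.differentiableOn
      fun s hs => hs⟩
  let loop : TransvectionWord ι S :=
    mapCoeff line u * mapCoeff const (rationalWord d w Y) * (mapCoeff ratio w)⁻¹
  have hloop (s : ℂ) : mapCoeff (fun f : S => f.1 s) loop =
      mapCoeff (· * s) u * rationalWord d w Y * (rationalWord d w (Z s))⁻¹ := by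
    simp only [loop, _root_.map_mul, map_inv, mapCoeff_mapCoeff, line, const, ratio, rationalWord]
  have hone (s : ℂ) (hs : s ∈ U) : toMatrix (mapCoeff (fun f : S => f.1 s) loop) = 1 := by
    have hZs : toSL (rationalWord d w (Z s)) = _ :=
      hw.toSL_rationalWord_mul (toSL (mapCoeff (· * s) u)) Y hY ((hU s).1 hs)
    rw [hloop, toMatrix, MonoidHom.comp_apply, _root_.map_mul toSL, _root_.map_mul toSL, map_inv,
      hZs, mul_inv_cancel, _root_.map_one]
  have hconst := hx.wordHom_eq_of_toMatrix_eq_one third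
    (isOpen_ne_fun (P d).continuous continuous_const) (isPreconnected_setOf_eval_ne_zero hPd)
    (fun f : S => f.1) (fun f => f.2) loop hone hU₀ (t := 1) (by rwa [hU, hZ₁])
  simp only [hloop, hZ₀, hZ₁, mul_one, mul_zero, mapCoeff_id, _root_.map_mul, map_inv,
    hx.wordHom_mapCoeff_const_zero, one_mul, mul_inv_cancel] at hconst
  exact (mul_inv_eq_one.1 hconst.symm).symm

theorem wordHom_eq_of_toSL_eq (hw : IsRationalSection d w) (hx : IsSteinbergFlow x)
    (third : ∀ a b : ι, ∃ c, c ≠ a ∧ c ≠ b) {u v : TransvectionWord ι ℂ} (huv : toSL u = toSL v) :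
    hx.wordHom u = hx.wordHom v := by
  obtain ⟨Y, hY, huY⟩ := exists_evalAt_ne_zero_and (toSL u) hw.ne_zero
  have hu := hw.wordHom_rationalWord_mul hx third u hY huY
  have hv := hw.wordHom_rationalWord_mul hx third v hY (by rw [huv] at huY; exact huY)
  have huv' : toMatrix u = toMatrix v := congrArg coeMonoidHom huv
  rw [huv', hv] at hu
  exact (mul_right_cancel hu).symm

end IsRationalSection

lemma toSL_surjective [Nontrivial ι] {F : Type*} [Field F] :
    Function.Surjective (toSL : TransvectionWord ι F →* SpecialLinearGroup ι F) := by
  refine transvection_induction _ (fun i j hij c => ⟨FreeGroup.of (⟨(i, j), hij⟩, c), toSL_of _ _⟩)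
    ?_
  rintro _ _ ⟨u, rfl⟩ ⟨v, rfl⟩
  exact ⟨u * v, _root_.map_mul toSL u v⟩

namespace IsSteinbergFlow

variable [Nontrivial ι]

theorem exists_monoidHom_comp_toSL (hx : IsSteinbergFlow x)
    (third : ∀ a b : ι, ∃ c, c ≠ a ∧ c ≠ b) :
    ∃ R : SpecialLinearGroup ι ℂ →* GL κ ℂ, R.comp toSL = hx.wordHom := by
  obtain ⟨d, w, hw⟩ := exists_isRationalSection ι
  have hker : toSL.ker ≤ hx.wordHom.ker := fun u hu => by
    rw [MonoidHom.mem_ker, ← _root_.map_one hx.wordHom]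
    exact hw.wordHom_eq_of_toSL_eq hx third (by rw [hu, _root_.map_one])
  exact ⟨toSL.liftOfSurjective toSL_surjective ⟨hx.wordHom, hker⟩,
    toSL.liftOfRightInverse_comp _ (Function.rightInverse_surjInv toSL_surjective)
       ⟨hx.wordHom, hker⟩⟩

end IsSteinbergFlow

end Representation

section Algebraicity

open MvPolynomial TransvectionWord

/-- Partition of unity on an affine variety `v`: a function which near each point is a quotient of
polynomials is a polynomial. -/
theorem exists_eq_eval_of_locally_fraction {k σ T : Type*} [Field k] [IsAlgClosed k] [Finite σ]
    {I : Ideal (MvPolynomial σ k)} {v : T → σ → k} (hv : Set.range v = zeroLocus k I) (f : T → k)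
    (hf : ∀ z, ∃ p q, eval (v z) p ≠ 0 ∧ ∀ y, eval (v y) p * f y = eval (v y) q) :
    ∃ P, ∀ y, f y = eval (v y) P := by
  let J : Ideal (MvPolynomial σ k) :=
    { carrier := {p | ∃ q, ∀ y, eval (v y) p * f y = eval (v y) q}
      zero_mem' := ⟨0, fun y => by simp⟩
      add_mem' := by
        rintro p₁ p₂ ⟨q₁, h₁⟩ ⟨q₂, h₂⟩
        exact ⟨q₁ + q₂, fun y => by rw [_root_.map_add, _root_.map_add, add_mul, h₁, h₂]⟩
      smul_mem' := by
        rintro r p ⟨q, h⟩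
        exact ⟨r * q, fun y => by rw [smul_eq_mul, _root_.map_mul, _root_.map_mul, mul_assoc, h]⟩ }
  have hIJ : I ≤ J := fun p hp => ⟨0, fun y => by
    have hy : v y ∈ zeroLocus k I := hv ▸ Set.mem_range_self y
    rw [← aeval_eq_eval, hy p hp, zero_mul, _root_.map_zero]⟩
  have hJ : zeroLocus k J = ∅ := by
    refine Set.eq_empty_iff_forall_notMem.2 fun y hy => ?_
    obtain ⟨z, rfl⟩ := hv.symm ▸ zeroLocus_anti_mono hIJ hy
    obtain ⟨p, q, hp, hpq⟩ := hf z
    exact hp (hy p ⟨q, hpq⟩)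
  have hrad := vanishingIdeal_zeroLocus_eq_radical (K := k) J
  rw [hJ, vanishingIdeal_empty] at hrad
  obtain ⟨q, hq⟩ := (Ideal.eq_top_iff_one J).1 (Ideal.radical_eq_top.1 hrad.symm)
  exact ⟨q, fun y => by rw [← hq, _root_.map_one, one_mul]⟩

variable {ι κ : Type*}

/-- The functions of a matrix that are regular where `d` does not vanish. -/
def regularFunctions (d : MvPolynomial (ι × ι) ℂ) : Subalgebra ℂ (Matrix ι ι ℂ → ℂ) where
  carrier := {f | ∃ n q, ∀ Y, evalAt Y d ≠ 0 → evalAt Y d ^ n * f Y = evalAt Y q}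
  mul_mem' := by
    rintro f g ⟨n, p, hf⟩ ⟨m, q, hg⟩
    refine ⟨n + m, p * q, fun Y hY => ?_⟩
    rw [_root_.map_mul, ← hf Y hY, ← hg Y hY, pow_add, Pi.mul_apply, mul_mul_mul_comm]
  add_mem' := by
    rintro f g ⟨n, p, hf⟩ ⟨m, q, hg⟩
    refine ⟨n + m, d ^ m * p + d ^ n * q, fun Y hY => ?_⟩
    rw [_root_.map_add, _root_.map_mul, _root_.map_mul, map_pow, map_pow, ← hf Y hY, ← hg Y hY,
      Pi.add_apply]
    ring
  algebraMap_mem' c := ⟨0, C c, fun Y _ => by simp [evalAt]⟩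

lemma div_mem_regularFunctions (d c : MvPolynomial (ι × ι) ℂ) :
    (fun Y => evalAt Y c / evalAt Y d) ∈ regularFunctions d :=
  ⟨1, c, fun Y hY => by rw [pow_one, mul_div_cancel₀ _ hY]⟩

lemma IsPolynomialCurve.comp_mem_regularFunctions {f : ℂ → Matrix κ κ ℂ} (hf : IsPolynomialCurve f)
    {d : MvPolynomial (ι × ι) ℂ} {r : Matrix ι ι ℂ → ℂ} (hr : r ∈ regularFunctions d) (a b : κ) :
    (fun Y => f (r Y) a b) ∈ regularFunctions d := by
  obtain ⟨P, hP⟩ := hf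
  have := (Polynomial.aeval (⟨r, hr⟩ : regularFunctions d) (P a b)).2
  rw [Polynomial.aeval_subalgebra_coe] at this
  convert this with Y
  rw [Polynomial.aeval_fn_apply, hP]
  simp only [map_apply, Polynomial.coe_evalRingHom, Polynomial.coe_aeval_eq_eval]

variable [DecidableEq κ] [Fintype κ] {x : ι → ι → ℂ → Matrix κ κ ℂ}

lemma IsSteinbergFlow.wordHom_mem_regularFunctions (hx : IsSteinbergFlow x)
    (d : MvPolynomial (ι × ι) ℂ) (w : TransvectionWord ι (MvPolynomial (ι × ι) ℂ)) (a b : κ) :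
    (fun Y => (hx.wordHom (rationalWord d w Y)).1 a b) ∈ regularFunctions d := by
  induction w using FreeGroup.induction_on generalizing a b with
  | C1 =>
    simp only [rationalWord, _root_.map_one]
    exact algebraMap_mem (regularFunctions d) ((1 : Matrix κ κ ℂ) a b)
  | of q =>
    simp only [rationalWord, mapCoeff_of, coe_wordHom_of]
    exact (hx.isPolynomialCurve q.1.2).comp_mem_regularFunctions
      (div_mem_regularFunctions d q.2) a b
  | inv_of q =>
    simp only [rationalWord, map_inv (mapCoeff _), mapCoeff_of, coe_wordHom_of_inv]
    exact (hx.isPolynomialCurve q.1.2).comp_mem_regularFunctions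
      (neg_mem (div_mem_regularFunctions d q.2)) a b
  | mul v w hv hw =>
    simp only [rationalWord, _root_.map_mul, Units.val_mul, Matrix.mul_apply]
    convert sum_mem (S := regularFunctions d) fun c _ => mul_mem (hv a c) (hw c b) with Y
    rw [Finset.sum_apply]
    rfl

variable [DecidableEq ι] [Fintype ι]

variable (ι) in
lemma range_entries_eq_zeroLocus (k : Type*) [Field k] :
    Set.range (fun (g : SpecialLinearGroup ι k) (q : ι × ι) => g.1 q.1 q.2) =
      zeroLocus k (Ideal.span {(mvPolynomialX ι ι k).det - 1}) := by
  have hdet (v : ι × ι → k) :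
      eval v (mvPolynomialX ι ι k).det = (of fun i j => v (i, j)).det := by
    rw [RingHom.map_det]
    exact congrArg det (mvPolynomialX_mapMatrix_eval (of fun i j => v (i, j)))
  ext v
  rw [zeroLocus_span]
  simp only [Set.mem_range, Set.mem_ofPred_eq, Set.mem_singleton_iff, forall_eq, aeval_eq_eval,
    map_sub, _root_.map_one, sub_eq_zero]
  change _ ↔ eval v _ = 1
  rw [hdet]
  exact ⟨fun ⟨g, hg⟩ => hg ▸ g.2, fun h => ⟨⟨of fun i j => v (i, j), h⟩, rfl⟩⟩

theorem IsSteinbergFlow.exists_eq_eval_of_comp_toSL_eq [Nontrivial ι] (hx : IsSteinbergFlow x)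
    (third : ∀ a b : ι, ∃ c, c ≠ a ∧ c ≠ b) {R : SpecialLinearGroup ι ℂ →* GL κ ℂ}
    (hR : R.comp toSL = hx.wordHom) (a b : κ) :
    ∃ P : MvPolynomial (ι × ι) ℂ, ∀ g : SpecialLinearGroup ι ℂ,
      (R g).1 a b = eval (fun q => g.1 q.1 q.2) P := by
  obtain ⟨d, w, hw⟩ := exists_isRationalSection ι
  refine exists_eq_eval_of_locally_fraction (range_entries_eq_zeroLocus ι ℂ)
    (fun g => (R g).1 a b) fun z => ?_
  obtain ⟨Y, hY, hzY⟩ := exists_evalAt_ne_zero_and z hw.ne_zero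
  let B : GL κ ℂ := hx.wordHom (rationalWord d w Y)
  have hRX (g : SpecialLinearGroup ι ℂ) (hg : evalAt (g.1 * Y) d ≠ 0) :
      R g = hx.wordHom (rationalWord d w (g.1 * Y)) * B⁻¹ := by
    obtain ⟨u, rfl⟩ := toSL_surjective g
    rw [eq_mul_inv_iff_mul_eq, ← MonoidHom.comp_apply R, hR]
    exact (hw.wordHom_rationalWord_mul hx third u hY hg).symm
  have hreg : (fun Z => ((hx.wordHom (rationalWord d w Z)).1 * (B⁻¹).1) a b) ∈
      regularFunctions d := by
    simp only [Matrix.mul_apply]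
    convert sum_mem (S := regularFunctions d) fun c _ => mul_mem
      (hx.wordHom_mem_regularFunctions d w a c) (algebraMap_mem _ ((B⁻¹).1 c b)) with Z
    rw [Finset.sum_apply]
    rfl
  obtain ⟨n, q, hq⟩ := hreg
  obtain ⟨p', hp'⟩ := exists_evalAt_mul_mul 1 Y (d ^ (n + 1))
  obtain ⟨q', hq'⟩ := exists_evalAt_mul_mul 1 Y (d * q)
  simp only [one_mul, map_pow, _root_.map_mul] at hp' hq'
  refine ⟨p', q', (hp' z.1).trans_ne (pow_ne_zero _ hzY), fun g => ?_⟩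
  change evalAt g.1 p' * _ = evalAt g.1 q'
  rw [hp', hq']
  by_cases hg : evalAt (g.1 * Y) d = 0
  · rw [hg, zero_pow n.succ_ne_zero, zero_mul, zero_mul]
  · rw [pow_succ', mul_assoc, hRX g hg, Units.val_mul, hq _ hg]

end Algebraicity

section Restriction

lemma conj_mem_eqLocus_iff {G H : Type*} [Group G] [Group H] {φ ψ : G →* H} {g n : G}
    (hn : n ∈ φ.eqLocus ψ) :
    g * n * g⁻¹ ∈ φ.eqLocus ψ ↔ Commute ((ψ g)⁻¹ * φ g) (ψ n) := by
  have hn : φ n = ψ n := hn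
  change φ (g * n * g⁻¹) = ψ (g * n * g⁻¹) ↔ _
  rw [_root_.map_mul, _root_.map_mul, map_inv, _root_.map_mul, _root_.map_mul, map_inv, hn,
    mul_inv_eq_iff_eq_mul, commute_iff_eq, mul_assoc _ (φ g), inv_mul_eq_iff_eq_mul]
  simp only [mul_assoc]

variable {ι : Type*} [DecidableEq ι] [Fintype ι]

lemma containsElementary_of_transvection_mem {q : ℕ} {K : Subgroup (SpecialLinearGroup ι ℤ)}
    (hK : ∀ i j (hij : i ≠ j), 𝐞 hij (q : ℤ) ∈ K) : ContainsElementary q K := by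
  rintro i j hij _ ⟨t, rfl⟩
  have h := K.zpow_mem (hK i j hij) t
  rwa [transvection_zpow, Int.cast_id, mul_comm] at h

lemma ContainsElementary.conj_mem {q : ℕ} {K : Subgroup (SpecialLinearGroup ι ℤ)}
    (hK : ContainsElementary q K) {i j k m : ι} (hkm : k ≠ m) (hij : i ≠ j)
    (hne : i = m → j ≠ k) (s : ℤ) {t : ℤ} (ht : (q : ℤ) ∣ t) :
    𝐞 hkm s * 𝐞 hij t * (𝐞 hkm s)⁻¹ ∈ K := by
  obtain rfl | him := eq_or_ne i m
  · rw [transvection_conj_transvection hkm hij (hne rfl).symm]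
    exact K.mul_mem (hK _ (ht.mul_left _)) (hK _ ht)
  · obtain rfl | hjk := eq_or_ne j k
    · have h := transvection_mul_transvection hij hkm him t s
      rw [mul_assoc, ← inv_mul_eq_iff_eq_mul, ← mul_assoc] at h
      rw [← h, mul_inv_cancel_right]
      exact K.mul_mem (K.inv_mem (hK _ (ht.mul_right _))) (hK _ ht)
    · rw [(commute_transvection hkm hij hjk.symm him.symm s t).eq, mul_inv_cancel_right]
      exact hK _ ht

/-- The missing transvection `e_mk(s)` is a commutator through a third index. -/
lemma eq_top_of_transvection_mem_of_ne {F : Type*} [Field F] [Nontrivial ι]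
    (third : ∀ a b : ι, ∃ c, c ≠ a ∧ c ≠ b) (Z : Subgroup (SpecialLinearGroup ι F)) {k m : ι}
    (hZ : ∀ i j (hij : i ≠ j) (s : F), (i = m → j ≠ k) → 𝐞 hij s ∈ Z) : Z = ⊤ := by
  refine (Subgroup.eq_top_iff' Z).mpr fun g =>
    transvection_induction (· ∈ Z) (fun i j hij s => ?_) (fun _ _ => Z.mul_mem) g
  obtain ⟨p, hpi, hpj⟩ := third i j
  by_cases hne : i = m → j ≠ k
  · exact hZ i j hij s hne
  · push Not at hne
    obtain ⟨rfl, rfl⟩ := hne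
    have hip := hZ i p hpi.symm s fun _ => hpj
    have hpj' := hZ p j hpj 1 fun h => absurd h hpi
    have h := transvection_conj_transvection hpi.symm hpj hij s 1
    rw [mul_one] at h
    rw [eq_mul_inv_of_mul_eq h.symm]
    exact Z.mul_mem (Z.mul_mem (Z.mul_mem hip hpj') (Z.inv_mem hip)) (Z.inv_mem hpj')

variable {κ : Type*} [DecidableEq κ] [Fintype κ]

omit [DecidableEq κ] in
lemma IsPolynomialCurve.commute_of_natCast {f : ℂ → Matrix κ κ ℂ} (hf : IsPolynomialCurve f)
    {l : ℂ} (hl : l ≠ 0) {c : Matrix κ κ ℂ} (hc : ∀ k : ℕ, Commute c (f (l * k))) (t : ℂ) :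
    Commute c (f t) :=
  ((IsPolynomialCurve.const c).mul hf).eq_of_eq_mul_natCast (hf.mul (.const c)) hl hc t

/-- The subgroup of `SL_n(ℤ)` on which `ρ` agrees with the representation `R` of `SL_n(ℂ)`. -/
def agreementSubgroup (ρ : SpecialLinearGroup ι ℤ →* GL κ ℂ)
    (R : SpecialLinearGroup ι ℂ →* GL κ ℂ) : Subgroup (SpecialLinearGroup ι ℤ) :=
  ρ.eqLocus (R.comp (SpecialLinearGroup.map (Int.castRingHom ℂ)))

variable {R : SpecialLinearGroup ι ℂ →* GL κ ℂ} {ρ : SpecialLinearGroup ι ℤ →* GL κ ℂ} {l : ℕ}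

/-- The discrepancy of `ρ` and `R` at `e_km(s)` commutes with every `R (e_ij(t))`, `l ∣ t`, for
which `e_ij` is not opposite to `e_km`; by Zariski density it commutes with the image of `R`. -/
lemma transvection_conj_mem_agreementSubgroup [Nontrivial ι] (third : ∀ a b : ι, ∃ c, c ≠ a ∧ c ≠ b)
    (hR : ∀ i j (hij : i ≠ j), IsPolynomialCurve fun t => (R (𝐞 hij t)).1) (hl : l ≠ 0)
    (hK : ContainsElementary l (agreementSubgroup ρ R))
    {k m : ι} (hkm : k ≠ m) (s : ℤ) {n : SpecialLinearGroup ι ℤ}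
    (hn : n ∈ agreementSubgroup ρ R) :
    𝐞 hkm s * n * (𝐞 hkm s)⁻¹ ∈ agreementSubgroup ρ R := by
  refine (conj_mem_eqLocus_iff hn).mpr ?_
  set A := R.comp (SpecialLinearGroup.map (Int.castRingHom ℂ))
  set c := (A (𝐞 hkm s))⁻¹ * ρ (𝐞 hkm s)
  have hc (i j : ι) (hij : i ≠ j) (hne : i = m → j ≠ k) (b : ℕ) :
      Commute c (R (𝐞 hij (l * b : ℂ))) := by
    have h := (conj_mem_eqLocus_iff (hK hij (dvd_mul_right (l : ℤ) b))).mp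
      (hK.conj_mem hkm hij hne s (dvd_mul_right _ _))
    have hA : A (𝐞 hij (l * b : ℤ)) = R (𝐞 hij (l * b : ℂ)) := by
      simp only [A, MonoidHom.comp_apply, map_transvection, eq_intCast, Int.cast_mul,
        Int.cast_natCast]
    exact hA ▸ h
  have hZ : (Subgroup.centralizer {c}).comap R = ⊤ := by
    refine eq_top_of_transvection_mem_of_ne third _ (k := k) (m := m) fun i j hij t hne => ?_
    have h := (hR i j hij).commute_of_natCast (Nat.cast_ne_zero.mpr hl)
      (fun b => (hc i j hij hne b).units_val) t
    exact Subgroup.mem_centralizer_singleton_iff.mpr (Commute.units_of_val h).eq.symm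
  have hmem := (Subgroup.eq_top_iff' _).mp hZ (SpecialLinearGroup.map (Int.castRingHom ℂ) n)
  exact (Subgroup.mem_centralizer_singleton_iff.mp hmem).symm

theorem eq_map_of_mem_congruenceSubgroup {n : ℕ}
    {R : SpecialLinearGroup (Fin (n + 3)) ℂ →* GL κ ℂ}
    {ρ : SpecialLinearGroup (Fin (n + 3)) ℤ →* GL κ ℂ}
    (hR : ∀ i j (hij : i ≠ j), IsPolynomialCurve fun t => (R (𝐞 hij t)).1) (hl : l ≠ 0)
    (hρ : ∀ i j (hij : i ≠ j), ρ (𝐞 hij (l : ℤ)) = R (𝐞 hij (l : ℂ)))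
    {g : SpecialLinearGroup (Fin (n + 3)) ℤ} (hg : g ∈ congruenceSubgroup _ l) :
    ρ g = R (SpecialLinearGroup.map (Int.castRingHom ℂ) g) := by
  let K := agreementSubgroup ρ R
  have hK : ContainsElementary l K := by
    refine containsElementary_of_transvection_mem fun i j hij => ?_
    change ρ _ = R (SpecialLinearGroup.map _ _)
    rw [hρ, map_transvection]
    simp
  have hnormalizer : Subgroup.normalizer (K : Set (SpecialLinearGroup (Fin (n + 3)) ℤ)) = ⊤ := by
    refine eq_top_of_containsElementary_one (n + 1) _ fun k m hkm s _ => ?_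
    have hconj (s : ℤ) {n} (hn : n ∈ K) : 𝐞 hkm s * n * (𝐞 hkm s)⁻¹ ∈ K :=
      transvection_conj_mem_agreementSubgroup
        (fun a b => Fin.exists_ne_and_ne_of_two_lt a b (by lia)) hR hl hK hkm s hn
    refine Subgroup.mem_normalizer_iff.mpr fun n => ⟨hconj s, fun hn => ?_⟩
    have h := hconj (-s) hn
    rw [← transvection_inv] at h
    group at h
    exact h
  exact congruenceSubgroup_le_of_containsElementary hl n K
    (Subgroup.normalizer_eq_top_iff.mp hnormalizer) hK hg

end Restriction

section Unipotence

lemma isNilpotent_sub_one_of_isConj {S : Type*} [Ring S] {u v : Sˣ} (huv : IsConj u v)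
    (hu : IsNilpotent (u.1 - 1)) : IsNilpotent (v.1 - 1) := by
  obtain ⟨w, rfl⟩ := isConj_iff.mp huv
  obtain ⟨k, hk⟩ := hu
  have h : (w * u * w⁻¹).1 - 1 = w * (u.1 - 1) * w⁻¹ := by simp [mul_sub, sub_mul]
  exact ⟨k, by rw [h, Units.conj_pow, hk, mul_zero, zero_mul]⟩

variable {κ : Type*} [DecidableEq κ] [Fintype κ]

lemma isNilpotent_sub_one_of_charpoly_eq {S : Type*} [CommRing S] {A : Matrix κ κ S}
    (hA : A.charpoly = (1 : Matrix κ κ S).charpoly) : IsNilpotent (A - 1) := by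
  have h := Matrix.aeval_self_charpoly A
  rw [hA, Matrix.charpoly_one] at h
  exact ⟨Fintype.card κ, by simpa using h⟩

open Polynomial in
lemma IsPolynomialCurve.charpoly_zero_eq {f : ℂ → Matrix κ κ ℂ} (hf : IsPolynomialCurve f) {t : ℂ}
    (hconst : ∀ s ≠ 0, (f s).charpoly = (f t).charpoly) : (f 0).charpoly = (f t).charpoly := by
  obtain ⟨P, hP⟩ := hf
  have hcoeff (s : ℂ) (m : ℕ) : (f s).charpoly.coeff m = (P.charpoly.coeff m).eval s := by
    rw [hP, Matrix.charpoly_map, Polynomial.coeff_map, coe_evalRingHom]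
  ext m
  suffices P.charpoly.coeff m = C ((f t).charpoly.coeff m) by rw [hcoeff, this, eval_C]
  refine eq_of_infinite_eval_eq _ _ ((Set.finite_singleton (0 : ℂ)).infinite_compl.mono ?_)
  intro s hs
  change eval s _ = eval s _
  rw [eval_C, ← hcoeff, hconst s hs]

variable {ι : Type*} [DecidableEq ι] [Fintype ι] {i j : ι}

lemma diag2n_mul_transvection {F : Type*} [Field F] (hij : i ≠ j) {a : F} (ha : a ≠ 0) (t : F) :
    diag2n hij a ha * 𝐞 hij t = 𝐞 hij (a ^ 2 * t) * diag2n hij a ha := by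
  apply Subtype.ext
  ext p q
  simp only [coe_mul, diag2n_coe, transvection_coe, mul_add, add_mul, Matrix.add_apply,
    Matrix.diagonal_mul, Matrix.mul_diagonal, Matrix.single_apply, Matrix.one_apply]
  grind

lemma isConj_transvection_of_ne_zero {F : Type*} [Field F] [IsAlgClosed F] (hij : i ≠ j) {s t : F}
    (hs : s ≠ 0) (ht : t ≠ 0) : IsConj (𝐞 hij t) (𝐞 hij s) := by
  obtain ⟨a, ha⟩ := IsAlgClosed.exists_pow_nat_eq (s / t) two_pos
  have ha₀ : a ≠ 0 := by
    rintro rfl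
    exact div_ne_zero hs ht (by rw [← ha, zero_pow two_ne_zero])
  refine isConj_iff.mpr ⟨diag2n hij a ha₀, mul_inv_eq_iff_eq_mul.mpr ?_⟩
  rw [diag2n_mul_transvection, ha, div_mul_cancel₀ _ ht]

variable {R : SpecialLinearGroup ι ℂ →* GL κ ℂ}

open Polynomial in
lemma isPolynomialCurve_of_eq_eval (hR : ∀ a b, ∃ P : MvPolynomial (ι × ι) ℂ,
      ∀ g, (R g).1 a b = MvPolynomial.eval (fun q => g.1 q.1 q.2) P) (hij : i ≠ j) :
    IsPolynomialCurve fun t => (R (𝐞 hij t)).1 := by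
  choose P hP using hR
  refine ⟨of fun a b => MvPolynomial.aeval (fun q => (𝐞 hij (X : ℂ[X])).1 q.1 q.2) (P a b),
    fun t => ?_⟩
  ext a b
  have htransvection : SpecialLinearGroup.map (evalRingHom t) (𝐞 hij X) = 𝐞 hij t := by
    rw [map_transvection, coe_evalRingHom, eval_X]
  change (R (𝐞 hij t)).1 a b = aeval t (MvPolynomial.aeval _ (P a b))
  rw [hP, ← htransvection, MvPolynomial.comp_aeval_apply, MvPolynomial.aeval_eq_eval]
  rfl

theorem isNilpotent_transvection_sub_one (hij : i ≠ j)
    (hR : IsPolynomialCurve fun t => (R (𝐞 hij t)).1) (t : ℂ) :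
    IsNilpotent ((R (𝐞 hij t)).1 - 1) := by
  obtain rfl | ht := eq_or_ne t 0
  · simp
  apply isNilpotent_sub_one_of_charpoly_eq
  have h := hR.charpoly_zero_eq (t := t) fun s hs => by
    obtain ⟨w, hw⟩ := isConj_iff.mp (R.map_isConj (isConj_transvection_of_ne_zero hij hs ht))
    rw [← hw, Units.val_mul, Units.val_mul, Matrix.coe_units_inv, Matrix.charpoly_units_conj]
  simpa using h.symm

end Unipotence

lemma Emat_pow (n l : ℕ) :
    Emat n ℤ ^ l = 𝐞 (zero_ne_one : (0 : Fin (n + 3)) ≠ 1) (l : ℤ) := by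
  have h : Emat n ℤ = 𝐞 (zero_ne_one : (0 : Fin (n + 3)) ≠ 1) 1 := Subtype.ext rfl
  rw [h, transvection_pow, mul_one]

theorem exists_algebraic_of_isNilpotent {n l : ℕ} {κ : Type*} [DecidableEq κ] [Fintype κ]
    (hl : l ≠ 0) (ρ : SpecialLinearGroup (Fin (n + 3)) ℤ →* GL κ ℂ)
    (hρ : ∀ i j (hij : i ≠ j), IsNilpotent ((ρ (𝐞 hij (l : ℤ))).1 - 1)) :
    ∃ R : SpecialLinearGroup (Fin (n + 3)) ℂ →* GL κ ℂ,
      (∀ a b, ∃ P : MvPolynomial (Fin (n + 3) × Fin (n + 3)) ℂ,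
        ∀ g, (R g).1 a b = MvPolynomial.eval (fun q => g.1 q.1 q.2) P) ∧
      ∀ g ∈ congruenceSubgroup _ l, ρ g = R (SpecialLinearGroup.map (Int.castRingHom ℂ) g) := by
  have third (a b : Fin (n + 3)) : ∃ c, c ≠ a ∧ c ≠ b :=
    Fin.exists_ne_and_ne_of_two_lt a b (by lia)
  obtain ⟨x, hx, hxρ⟩ := exists_isSteinbergFlow ρ hl hρ
  obtain ⟨R, hR⟩ := hx.exists_monoidHom_comp_toSL third
  have hRx (i j) (hij : i ≠ j) (t : ℂ) : (R (𝐞 hij t)).1 = x i j t := by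
    rw [← TransvectionWord.toSL_of ⟨(i, j), hij⟩ t, ← MonoidHom.comp_apply R, hR]
    exact hx.coe_wordHom_of ⟨(i, j), hij⟩ t
  have hRpoly := hx.exists_eq_eval_of_comp_toSL_eq third hR
  refine ⟨R, hRpoly, fun g => eq_map_of_mem_congruenceSubgroup
    (fun i j hij => isPolynomialCurve_of_eq_eval hRpoly hij) hl fun i j hij => Units.ext ?_⟩
  rw [hRx, hxρ]

end SLDepth

open SLDepth in
/-- A finite-dimensional complex representation `ρ` of `SL_n(ℤ)` (`n ≥ 3`) has depth
dividing `ℓ` (restriction to `Γ_n(ℓ)` is algebraic) if and only if `ρ(E_{1,2}^ℓ)` is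
unipotent, i.e. `ρ(E_{1,2}^ℓ) - 1` is nilpotent. -/
theorem depthDvd_iff_elementary_pow_unipotent (n N ℓ : ℕ) (hℓ : 1 ≤ ℓ)
    (ρ : Matrix.SpecialLinearGroup (Fin (n + 3)) ℤ →* GL (Fin N) ℂ) :
    DepthDvd ρ ℓ ↔
      IsNilpotent ((ρ (Emat n ℤ ^ ℓ) : Matrix (Fin N) (Fin N) ℂ) - 1) := by
  rw [Emat_pow]
  constructor
  · rintro ⟨R, hR, hρR⟩
    rw [hρR _ (containsElementary_congruenceSubgroup zero_ne_one dvd_rfl), map_transvection]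
    exact isNilpotent_transvection_sub_one _ (isPolynomialCurve_of_eq_eval hR _) _
  · refine fun hu => exists_algebraic_of_isNilpotent (by lia) ρ fun i j hij => ?_
    exact isNilpotent_sub_one_of_isConj (ρ.map_isConj (isConj_transvection
      (fun a b => Fin.exists_ne_and_ne_of_two_lt a b (by lia)) zero_ne_one hij _)) hu
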